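/- For every integer s ≥ 1, consider the degree n = 2(2^s − 1) + 2^s = 3·2^s − 2 and the Kameko surjection Sq^0 : Q_{3·2^s − 2} → Q_{3·2^{s−1} − 3}. Then the subspace of GL_4(F_2)-invariant elements of the kernel of this map is trivial. -/

import Mathlib

/-!
Common setup: the polynomial algebra `P_4 = F_2[x_1,x_2,x_3,x_4]` (variables `X 0, ..., X 3`),
the Steenrod action, hit polynomials, the cohit spaces `Q_n`, and the (induced) actions of
`GL_4(F_2)` and of the symmetric group `Σ_4` on `Q_n`.
-/

open MvPolynomial

noncomputable section

abbrev kk : Type := ZMod 2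
abbrev P4 : Type := MvPolynomial (Fin 4) kk

/-- The total Steenrod square: the algebra endomorphism of `P4` with `X i ↦ X i + (X i)^2`.
For `g` homogeneous of degree `d`, `Sq^t g` is the degree-`d+t` homogeneous component
of `sqTotal g`. -/
def sqTotal : P4 →ₐ[kk] P4 := aeval fun i => X i + X i ^ 2

/-- The homogeneous polynomials of degree `n`, i.e. `(P_4)_n`, as a submodule. -/
def homog (n : ℕ) : Submodule kk P4 := homogeneousSubmodule (Fin 4) kk n

/-- The subspace `H_n` of hit polynomials of degree `n`: it is spanned by the elements
`Sq^{n-d}(g) = (sqTotal g)_n` for `g` homogeneous of degree `d < n`, i.e. by all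
`∑_{t>0} Sq^t(f_t)` with `f_t ∈ (P_4)_{n-t}`. -/
def hitSub (n : ℕ) : Submodule kk P4 :=
  Submodule.span kk
    {p | ∃ d, d < n ∧ ∃ g ∈ homog d, p = homogeneousComponent n (sqTotal g)}

/-- The cohit space `Q_n = (P_4)_n / H_n`. -/
abbrev Qn (n : ℕ) :=
  ↥(homog n) ⧸ ((hitSub n).comap (homog n).subtype)

/-- Projection of a polynomial onto its degree-`n` part, landing in `homog n`. -/
def toHomog (n : ℕ) : P4 →ₗ[kk] homog n :=
  (homogeneousComponent n).codRestrict (homog n) fun f => homogeneousComponent_mem n f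

/-- The class in `Q_n` of (the degree-`n` component of) a polynomial.  For `f`
homogeneous of degree `n` this is the class `[f]` of `f`. -/
def Qmk (n : ℕ) : P4 →ₗ[kk] Qn n :=
  ((hitSub n).comap (homog n).subtype).mkQ.comp (toHomog n)

/-- Substitution action of a matrix `M`: the algebra endomorphism `X i ↦ ∑ j M i j • X j`. -/
def substM (M : Matrix (Fin 4) (Fin 4) kk) : P4 →ₐ[kk] P4 :=
  aeval fun i => ∑ j, M i j • X j

/-- The set of invertible `4 × 4` matrices over `F_2`, i.e. `GL_4(F_2)`. -/
def glSet : Set (Matrix (Fin 4) (Fin 4) kk) := {M | IsUnit M}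

/-- The set of permutation matrices, i.e. `Σ_4 ⊆ GL_4(F_2)`. -/
def permSet : Set (Matrix (Fin 4) (Fin 4) kk) :=
  {M | ∃ σ : Equiv.Perm (Fin 4), M = σ.toPEquiv.toMatrix}

/-- Homogeneous polynomials of degree `n` whose class in `Q_n` is invariant under every
element of `G` (the action on classes being induced by `substM`): for every `M ∈ G`,
`M·f - f` is hit. -/
def invPre (n : ℕ) (G : Set (Matrix (Fin 4) (Fin 4) kk)) : Submodule kk P4 :=
  homog n ⊓ ⨅ M ∈ G, (hitSub n).comap ((substM M).toLinearMap - LinearMap.id)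

/-- The subspace `(Q_n)^G` of `G`-invariant classes in `Q_n`. -/
def QInv (n : ℕ) (G : Set (Matrix (Fin 4) (Fin 4) kk)) : Submodule kk (Qn n) :=
  (invPre n G).map (Qmk n)

/-- The `Σ_4`-submodule of `Q_n` generated by the classes of the polynomials in `S`:
the span of the classes of all the permuted polynomials `σ · f`, `σ ∈ Σ_4`, `f ∈ S`. -/
def permSpan (n : ℕ) (S : Set P4) : Submodule kk (Qn n) :=
  Submodule.span kk
    {c | ∃ σ : Equiv.Perm (Fin 4), ∃ f ∈ S, c = Qmk n (rename (⇑σ) f)}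

/-- Halve an exponent vector with all entries odd: `a ↦ (a-1)/2` entrywise. -/
def halfExp (d : Fin 4 →₀ ℕ) : Fin 4 →₀ ℕ :=
  d.mapRange (fun a => (a - 1) / 2) (by decide)

open scoped Classical in
/-- The down Kameko map `(P_4)_{2m+4} → (P_4)_m`: the linear map sending a monomial
`f` to `g` if `f = x₁x₂x₃x₄ · g²` (i.e. all exponents of `f` are odd) and to `0` otherwise. -/
def kameko : P4 →ₗ[kk] P4 :=
  (basisMonomials (Fin 4) kk).constr kk fun d =>
    if ∀ i, d i % 2 = 1 then monomial (halfExp d) 1 else 0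

/-- The kernel of the Kameko squaring operation `Sq^0 : Q_{2m+4} → Q_m` induced by
`kameko`: the image in `Q_{2m+4}` of the homogeneous polynomials of degree `2m+4`
whose Kameko image has zero class in `Q_m`. -/
def kamekoKer (m : ℕ) : Submodule kk (Qn (2 * m + 4)) :=
  (homog (2 * m + 4) ⊓ (LinearMap.ker (Qmk m)).comap kameko).map (Qmk (2 * m + 4))


set_option linter.unusedSimpArgs false

/-! ### Steenrod squares via a formal parameter -/

/-- The total square with a formal parameter. -/
def St : P4 →ₐ[kk] Polynomial P4 :=
  aeval fun i => Polynomial.C (X i) + Polynomial.X * Polynomial.C (X i ^ 2)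

def SqO (t : ℕ) (f : P4) : P4 := (St f).coeff t

theorem SqO_add (t : ℕ) (f g : P4) : SqO t (f + g) = SqO t f + SqO t g := by
  simp [SqO]

theorem St_X (i : Fin 4) :
    St (X i) = Polynomial.C (X i) + Polynomial.X * Polynomial.C (X i ^ 2) := by
  simp [St]

theorem St_C (a : kk) : St (C a) = Polynomial.C (C a) := by
  simp only [St, algHom_C]
  rfl

theorem SqO_zero (f : P4) : SqO 0 f = f := by
  unfold SqO
  induction f using MvPolynomial.induction_on with
  | C a => simp [St_C]
  | add p q hp hq => simp [hp, hq]
  | mul_X p i hp => simp [hp, St_X, Polynomial.mul_coeff_zero]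

theorem St_eval_one (f : P4) : (St f).eval 1 = sqTotal f := by
  induction f using MvPolynomial.induction_on with
  | C a => simp [St_C, sqTotal]
  | add p q hp hq => simp [hp, hq]
  | mul_X p i hp => simp [hp, St_X, sqTotal]

theorem SqO_hom_monomial (d : Fin 4 →₀ ℕ) (a : kk) (t : ℕ) :
    (SqO t (monomial d a)).IsHomogeneous (d.degree + t) := by
  suffices h : ∀ f : P4, ∀ n, (∃ d a, f = monomial d a ∧ d.degree = n) →
      ∀ t, (SqO t f).IsHomogeneous (n + t) from h _ _ ⟨d, a, rfl, rfl⟩ t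
  rintro f n ⟨d, a, rfl, rfl⟩
  clear t
  induction d using Finsupp.induction_linear generalizing a with
  | zero =>
    intro t
    have : monomial 0 a = (C a : P4) := rfl
    rw [this, SqO, St_C, Polynomial.coeff_C]
    split_ifs with h
    · subst h; simpa using isHomogeneous_C (Fin 4) a
    · exact isHomogeneous_zero _ _ _
  | add d e hd he =>
    intro t
    have : monomial (d + e) a = (monomial d a * monomial e 1 : P4) := by simp [monomial_mul]
    rw [this, SqO, map_mul, Polynomial.coeff_mul]
    refine IsHomogeneous.sum _ _ _ fun x hx => ?_
    have hx' : x.1 + x.2 = t := by simpa using hx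
    have := (hd a x.1).mul (he 1 x.2)
    have e2 : (d + e).degree + t = d.degree + x.1 + (e.degree + x.2) := by
      rw [map_add, ← hx']; ring
    rw [e2]; exact this
  | single i k =>
    induction k generalizing a with
    | zero =>
      intro t
      have : monomial (Finsupp.single i 0) a = (C a : P4) := by simp
      rw [this, SqO, St_C, Polynomial.coeff_C]
      split_ifs with h
      · subst h; simpa using isHomogeneous_C (Fin 4) a
      · exact isHomogeneous_zero _ _ _
    | succ k ih =>
      intro t
      have : monomial (Finsupp.single i (k + 1)) a = (X i * monomial (Finsupp.single i k) a : P4) := by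
        rw [X, monomial_mul, ← Finsupp.single_add, add_comm, one_mul]
      rw [this, SqO, map_mul, St_X, add_mul, Polynomial.coeff_add, Polynomial.coeff_C_mul]
      refine IsHomogeneous.add ?_ ?_
      · have := (isHomogeneous_X kk i).mul (ih a t)
        have e : (Finsupp.single i (k + 1)).degree + t
            = 1 + ((Finsupp.single i k).degree + t) := by
          rw [Finsupp.degree_single, Finsupp.degree_single]; omega
        rw [e]; exact this
      · rw [mul_assoc]
        cases t with
        | zero => simpa using isHomogeneous_zero _ _ _
        | succ t =>
          rw [Polynomial.coeff_X_mul, Polynomial.coeff_C_mul]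
          have := ((isHomogeneous_X kk i).pow 2).mul (ih a t)
          have e : (Finsupp.single i (k + 1)).degree + (t + 1)
              = 1 * 2 + ((Finsupp.single i k).degree + t) := by
            rw [Finsupp.degree_single, Finsupp.degree_single]; omega
          rw [e]; exact this

theorem SqO_sum {ι : Type*} (s : Finset ι) (t : ℕ) (f : ι → P4) :
    SqO t (∑ i ∈ s, f i) = ∑ i ∈ s, SqO t (f i) := by
  simp [SqO]

theorem SqO_hom {f : P4} {d : ℕ} (hf : f.IsHomogeneous d) (t : ℕ) :
    (SqO t f).IsHomogeneous (d + t) := by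
  rw [f.as_sum, SqO_sum]
  refine IsHomogeneous.sum _ _ _ fun x hx => ?_
  have : x.degree = d := by
    by_contra h
    exact (mem_support_iff.mp hx) (hf.coeff_eq_zero h)
  rw [← this]
  exact SqO_hom_monomial _ _ _

theorem comp_of_hom {f : P4} {d : ℕ} (hf : f.IsHomogeneous d) (n : ℕ) :
    homogeneousComponent n f = if n = d then f else 0 :=
  homogeneousComponent_of_mem ((mem_homogeneousSubmodule _ _).2 hf)

theorem comp_sqTotal {f : P4} {d : ℕ} (hf : f.IsHomogeneous d) (t : ℕ) :
    homogeneousComponent (d + t) (sqTotal f) = SqO t f := by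
  rw [← St_eval_one, Polynomial.eval_eq_sum, Polynomial.sum, map_sum]
  have : ∀ x ∈ (St f).support, homogeneousComponent (d + t) ((St f).coeff x * 1 ^ x)
      = if t = x then SqO x f else 0 := by
    intro x _
    rw [one_pow, mul_one, show (St f).coeff x = SqO x f from rfl, comp_of_hom (SqO_hom hf x)]
    simp only [add_right_inj]
  rw [Finset.sum_congr rfl this, Finset.sum_ite_eq]
  split_ifs with h
  · rfl
  · simpa [SqO] using (Polynomial.notMem_support_iff.mp h).symm

theorem comp_sqTotal_lt {f : P4} {d n : ℕ} (hf : f.IsHomogeneous d) (h : d ≤ n) :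
    homogeneousComponent n (sqTotal f) = SqO (n - d) f := by
  obtain ⟨t, rfl⟩ := Nat.exists_eq_add_of_le h
  rw [comp_sqTotal hf]; simp

/-- The ungraded space of hit polynomials. -/
def Hit : Submodule kk P4 := ⨅ n, (hitSub n).comap (homogeneousComponent n)

theorem mem_Hit {f : P4} : f ∈ Hit ↔ ∀ n, homogeneousComponent n f ∈ hitSub n := by
  simp [Hit]

theorem hitSub_le_homog (n : ℕ) : hitSub n ≤ homog n := by
  refine Submodule.span_le.2 ?_
  rintro p ⟨d, _, g, _, rfl⟩
  exact homogeneousComponent_mem n _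

theorem hitSub_le_Hit (n : ℕ) : hitSub n ≤ Hit := by
  intro f hf
  rw [mem_Hit]
  intro k
  rw [comp_of_hom ((mem_homogeneousSubmodule _ _).1 (hitSub_le_homog n hf))]
  split_ifs with h
  · subst h; exact hf
  · exact Submodule.zero_mem _

theorem Hit_homog {f : P4} {n : ℕ} (hf : f ∈ Hit) (h : f ∈ homog n) : f ∈ hitSub n := by
  have := mem_Hit.1 hf n
  rwa [comp_of_hom ((mem_homogeneousSubmodule _ _).1 h), if_pos rfl] at this

theorem SqO_mem_Hit (t : ℕ) (ht : 0 < t) (f : P4) : SqO t f ∈ Hit := by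
  rw [← sum_homogeneousComponent f, SqO_sum]
  refine Submodule.sum_mem _ fun d _ => ?_
  have hd := homogeneousComponent_isHomogeneous d f
  refine hitSub_le_Hit (d + t) (Submodule.subset_span ⟨d, by omega, _, 
    (mem_homogeneousSubmodule _ _).2 hd, ?_⟩)
  rw [comp_sqTotal hd]

theorem St_sq_coeff_even (h : P4) (t : ℕ) : (St h ^ 2).coeff (2 * t) = SqO t h ^ 2 := by
  rw [← Polynomial.map_frobenius_expand (p := 2), Polynomial.coeff_map, mul_comm 2 t,
    Polynomial.coeff_expand_mul (by norm_num)]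
  rfl

theorem St_sq_coeff_odd (h : P4) (t : ℕ) : (St h ^ 2).coeff (2 * t + 1) = 0 := by
  rw [← Polynomial.map_frobenius_expand (p := 2), Polynomial.coeff_map,
    Polynomial.coeff_expand (by norm_num), if_neg (by omega), map_zero]

theorem SqO_one_three (i j k : Fin 4) (g : P4) :
    SqO 1 (X i * X j * X k * g ^ 2) =
      X j * X k * (X i * g) ^ 2 + X i * X k * (X j * g) ^ 2 + X i * X j * (X k * g) ^ 2 := by
  have e : St (X i * X j * X k * g ^ 2) = Polynomial.C (X i * X j * X k) * St g ^ 2 +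
      Polynomial.X * (Polynomial.C (X j * X k * X i ^ 2 + X i * X k * X j ^ 2 + X i * X j * X k ^ 2)
        * St g ^ 2) + Polynomial.X * (Polynomial.X * (
        Polynomial.C (X i * X j ^ 2 * X k ^ 2 + X i ^ 2 * X j * X k ^ 2 + X i ^ 2 * X j ^ 2 * X k) *
         St g ^ 2 + Polynomial.X * (Polynomial.C (X i ^ 2 * X j ^ 2 * X k ^ 2) * St g ^ 2))) := by
    simp only [map_mul, map_pow, St_X, Polynomial.C_mul, Polynomial.C_add, Polynomial.C_pow]
    ring
  have h0 : (St g ^ 2).coeff 0 = g ^ 2 := by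
    have := St_sq_coeff_even g 0
    rwa [SqO_zero] at this
  have h1 : (St g ^ 2).coeff 1 = 0 := St_sq_coeff_odd g 0
  rw [SqO, e]
  rw [Polynomial.coeff_add, Polynomial.coeff_add, Polynomial.coeff_C_mul, h1,
    Polynomial.coeff_X_mul (n := 0), Polynomial.coeff_X_mul (n := 0), Polynomial.coeff_C_mul, h0,
    Polynomial.coeff_X_mul_zero]
  ring

theorem SqO_one_one (i : Fin 4) (g : P4) :
    SqO 1 (X i * g ^ 2) = X i ^ 2 * g ^ 2 := by
  have h0 : (St g ^ 2).coeff 0 = g ^ 2 := by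
    have := St_sq_coeff_even g 0
    rwa [SqO_zero] at this
  have h1 : (St g ^ 2).coeff 1 = 0 := St_sq_coeff_odd g 0
  rw [SqO, map_mul, map_pow, St_X, add_mul, mul_assoc, Polynomial.coeff_add, Polynomial.coeff_C_mul,
    h1, Polynomial.coeff_X_mul (n := 0), Polynomial.coeff_C_mul, h0]
  ring

theorem SqO_two (i j : Fin 4) (t : ℕ) (h : P4) :
    SqO (2 * (t + 1)) (X i * X j * h ^ 2) =
      X i * X j * SqO (t + 1) h ^ 2 + X i ^ 2 * (X j * SqO t h) ^ 2 := by
  have e : St (X i * X j * h ^ 2) = Polynomial.C (X i * X j) * St h ^ 2 +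
      Polynomial.X * (Polynomial.C (X j * X i ^ 2 + X i * X j ^ 2) * St h ^ 2) +
      Polynomial.X * (Polynomial.X * (Polynomial.C (X i ^ 2 * X j ^ 2) * St h ^ 2)) := by
    simp only [map_mul, map_pow, St_X, Polynomial.C_mul, Polynomial.C_add, Polynomial.C_pow]
    ring
  rw [SqO, e]
  have e2 : 2 * (t + 1) = 2 * t + 1 + 1 := by ring
  rw [Polynomial.coeff_add, Polynomial.coeff_add, Polynomial.coeff_C_mul, St_sq_coeff_even, e2,
    Polynomial.coeff_X_mul, Polynomial.coeff_X_mul, Polynomial.coeff_X_mul, Polynomial.coeff_C_mul,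
    Polynomial.coeff_C_mul, St_sq_coeff_even, St_sq_coeff_odd]
  ring

theorem sqHit (i : Fin 4) (g : P4) : X i ^ 2 * g ^ 2 ∈ Hit := by
  rw [← SqO_one_one]; exact SqO_mem_Hit 1 one_pos _

theorem sqHit' (i : Fin 4) (g : P4) : (X i * g) ^ 2 ∈ Hit := by
  rw [mul_pow]; exact sqHit i g

theorem char2 (f : P4) : f + f = 0 := CharTwo.add_self_eq_zero f

theorem SqO_four (t : ℕ) (h : P4) :
    X 0 * X 1 * X 2 * X 3 * SqO (t + 1) h ^ 2
     + X 2 * X 3 * (X 0 * X 1 * SqO t h) ^ 2 + X 1 * X 3 * (X 0 * X 2 * SqO t h) ^ 2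
     + X 1 * X 2 * (X 0 * X 3 * SqO t h) ^ 2 + X 0 * X 3 * (X 1 * X 2 * SqO t h) ^ 2
     + X 0 * X 2 * (X 1 * X 3 * SqO t h) ^ 2 + X 0 * X 1 * (X 2 * X 3 * SqO t h) ^ 2 ∈ Hit := by
  have key := SqO_mem_Hit (2 * (t + 1)) (by omega) (X 0 * X 1 * X 2 * X 3 * h ^ 2)
  have e : St (X 0 * X 1 * X 2 * X 3 * h ^ 2) = Polynomial.C (X 0 * X 1 * X 2 * X 3) * St h ^ 2 +
      Polynomial.X * (Polynomial.C (X 0 * X 1 * X 2 * X 3 * (X 0 + X 1 + X 2 + X 3)) * St h ^ 2) +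
      Polynomial.X * (Polynomial.X * (Polynomial.C (X 0 * X 1 * X 2 * X 3 * 
        (X 0 * X 1 + X 0 * X 2 + X 0 * X 3 + X 1 * X 2 + X 1 * X 3 + X 2 * X 3)) * St h ^ 2)) + 
      Polynomial.X * (Polynomial.X * (Polynomial.X * (Polynomial.C (X 0 * X 1 * X 2 * X 3 * 
        (X 0 * X 1 * X 2 + X 0 * X 1 * X 3 + X 0 * X 2 * X 3 + X 1 * X 2 * X 3)) * St h ^ 2 + 
      Polynomial.X * (Polynomial.C ((X 0 * X 1 * X 2 * X 3) ^ 2) * St h ^ 2)))) := by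
    simp only [map_mul, map_pow, St_X, Polynomial.C_mul, Polynomial.C_add, Polynomial.C_pow]
    ring
  rw [SqO, e] at key
  have e2 : 2 * (t + 1) = 2 * t + 1 + 1 := by ring
  have last : ∃ g : P4, (Polynomial.X * (Polynomial.C (X 0 * X 1 * X 2 * X 3 * 
        (X 0 * X 1 * X 2 + X 0 * X 1 * X 3 + X 0 * X 2 * X 3 + X 1 * X 2 * X 3)) * St h ^ 2 + 
      Polynomial.X * (Polynomial.C ((X 0 * X 1 * X 2 * X 3) ^ 2) * St h ^ 2))).coeff (2 * t) =
      (X 0 * g) ^ 2 := by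
    cases t with
    | zero => exact ⟨0, by simp⟩
    | succ t =>
      refine ⟨X 1 * X 2 * X 3 * SqO t h, ?_⟩
      have e3 : 2 * (t + 1) = 2 * t + 1 + 1 := by ring
      rw [e3, Polynomial.coeff_X_mul, Polynomial.coeff_add, Polynomial.coeff_X_mul,
        Polynomial.coeff_C_mul, Polynomial.coeff_C_mul, St_sq_coeff_even, St_sq_coeff_odd]
      ring
  obtain ⟨g, hg⟩ := last
  rw [Polynomial.coeff_add, Polynomial.coeff_add, Polynomial.coeff_add,
    Polynomial.coeff_C_mul, St_sq_coeff_even, e2,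
    Polynomial.coeff_X_mul, Polynomial.coeff_X_mul, Polynomial.coeff_X_mul,
    Polynomial.coeff_X_mul, Polynomial.coeff_X_mul, hg, Polynomial.coeff_C_mul,
    Polynomial.coeff_C_mul, St_sq_coeff_even, St_sq_coeff_odd] at key
  have := Submodule.sub_mem _ key (sqHit' 0 g)
  convert this using 1
  ring

/-- Multiplication by `x_i x_j` after squaring preserves hit polynomials. -/
theorem L1 (i j : Fin 4) {g : P4} (hg : g ∈ Hit) : X i * X j * g ^ 2 ∈ Hit := by
  have hspan : ∀ n, ∀ g ∈ hitSub n, X i * X j * g ^ 2 ∈ Hit := by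
    intro n g hg
    induction hg using Submodule.span_induction with
    | mem x hx =>
      obtain ⟨d, hd, h, hh, rfl⟩ := hx
      rw [comp_sqTotal_lt ((mem_homogeneousSubmodule _ _).1 hh) hd.le]
      obtain ⟨t, ht⟩ : ∃ t, n - d = t + 1 := ⟨n - d - 1, by omega⟩
      rw [ht]
      have h1 := SqO_mem_Hit (2 * (t + 1)) (by omega) (X i * X j * h ^ 2)
      rw [SqO_two] at h1
      exact (Submodule.add_mem_iff_left _ (sqHit i _)).1 h1
    | zero => simp
    | add x y _ _ hx hy =>
      rw [CharTwo.add_sq, mul_add]; exact Submodule.add_mem _ hx hy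
    | smul a x _ hx =>
      rw [smul_pow, mul_smul_comm]; exact Submodule.smul_mem _ _ hx
  rw [← sum_homogeneousComponent g, CharTwo.sum_sq, Finset.mul_sum]
  exact Submodule.sum_mem _ fun n _ => hspan n _ (mem_Hit.1 hg n)



set_option linter.unusedSimpArgs false
/-! ### Operators on the quotient -/

abbrev QQ : Type := P4 ⧸ Hit

def cl : P4 →ₗ[kk] QQ := Hit.mkQ

theorem cl_eq_zero {f : P4} : cl f = 0 ↔ f ∈ Hit := by
  simp [cl]

theorem cc (y : QQ) : y + y = 0 := by
  have : (2 : kk) • y = 0 := by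
    rw [show (2 : kk) = 0 from rfl, zero_smul]
  rwa [two_smul] at this

theorem eq_of_cc {y z : QQ} (h : y + z = 0) : y = z := by
  have : y = y + (z + z) := by rw [cc, add_zero]
  rw [this, ← add_assoc, h, zero_add]

def preP (i j : Fin 4) : P4 →ₗ[kk] P4 where
  toFun f := X i * X j * f ^ 2
  map_add' f g := by rw [CharTwo.add_sq, mul_add]
  map_smul' a f := by
    have : a ^ 2 = a := by revert a; decide
    rw [smul_pow, mul_smul_comm, this]; rfl

def pq (i j : Fin 4) : QQ →ₗ[kk] QQ :=
  Hit.mapQ Hit (preP i j) fun _ h => L1 i j h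

theorem cl_pre (i j : Fin 4) (f : P4) : cl (X i * X j * f ^ 2) = pq i j (cl f) := rfl

theorem cl_surj (y : QQ) : ∃ f, cl f = y := Submodule.mkQ_surjective _ y

theorem pq_symm (i j : Fin 4) : pq i j = pq j i := by
  ext1
  apply LinearMap.ext
  intro f
  change cl (X i * X j * f ^ 2) = cl (X j * X i * f ^ 2)
  rw [mul_comm (X i)]

theorem cl_sq (i : Fin 4) (f : P4) : cl (X i * (X i * f ^ 2)) = 0 := by
  rw [cl_eq_zero]
  convert sqHit i f using 1
  ring

theorem DT (i j k : Fin 4) (g : P4) :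
    pq j k (cl (X i * g)) + pq i k (cl (X j * g)) + pq i j (cl (X k * g)) = 0 := by
  rw [← cl_pre, ← cl_pre, ← cl_pre, ← map_add, ← map_add, cl_eq_zero, ← SqO_one_three]
  exact SqO_mem_Hit 1 one_pos _

theorem cl_pre' (i j : Fin 4) (f : P4) : cl (X i * (X j * f ^ 2)) = pq i j (cl f) := by
  rw [← mul_assoc, cl_pre]

theorem sh1 (i j k : Fin 4) (y : QQ) : pq i j (pq i k y) = pq i k (pq i j y) := by
  obtain ⟨h, rfl⟩ := cl_surj y
  have := DT i j k (X i * h ^ 2)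
  rw [cl_sq, map_zero, zero_add, cl_pre', cl_pre', pq_symm j i, pq_symm k i] at this
  exact (eq_of_cc this).symm

theorem R2g (i j k l : Fin 4) (y : QQ) :
    pq j k (pq i l y) + pq i k (pq j l y) + pq i j (pq k l y) = 0 := by
  obtain ⟨h, rfl⟩ := cl_surj y
  have := DT i j k (X l * h ^ 2)
  rwa [cl_pre', cl_pre', cl_pre'] at this

theorem K4 (y : QQ) :
    pq 2 3 (pq 0 1 y) + pq 1 3 (pq 0 2 y) + pq 1 2 (pq 0 3 y) + pq 0 3 (pq 1 2 y)
     + pq 0 2 (pq 1 3 y) + pq 0 1 (pq 2 3 y) = 0 := by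
  obtain ⟨h, rfl⟩ := cl_surj y
  have := SqO_four 0 (h ^ 2)
  have h1 : SqO (0 + 1) (h ^ 2) = 0 := by
    rw [SqO, map_pow]; exact St_sq_coeff_odd h 0
  rw [h1, SqO_zero] at this
  rw [← cl_eq_zero] at this
  simp only [map_add, cl_pre] at this
  rw [← this]
  simp

theorem dis1 (y : QQ) : pq 0 1 (pq 2 3 y) = pq 2 3 (pq 0 1 y) := by
  have a := R2g 1 2 3 0 y
  have b := R2g 0 2 3 1 y
  have c := K4 y
  simp only [pq_symm 1 0, pq_symm 2 0, pq_symm 3 0, pq_symm 2 1, pq_symm 3 1] at a b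
  apply eq_of_cc
  have d1 := cc (pq 1 3 (pq 0 2 y))
  have d2 := cc (pq 1 2 (pq 0 3 y))
  have d3 := cc (pq 2 3 (pq 0 1 y))
  have d4 := cc (pq 0 3 (pq 1 2 y))
  have d5 := cc (pq 0 2 (pq 1 3 y))
  linear_combination (norm := abel) c + a + b - d1 - d2 - d3 - d4 - d5

theorem dis2 (y : QQ) : pq 0 2 (pq 1 3 y) = pq 1 3 (pq 0 2 y) := by
  have a := R2g 0 1 2 3 y
  have b := R2g 0 2 3 1 y
  have c := K4 y
  simp only [pq_symm 1 0, pq_symm 2 0, pq_symm 3 0, pq_symm 2 1, pq_symm 3 1] at a b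
  apply eq_of_cc
  have d2 := cc (pq 1 2 (pq 0 3 y))
  have d3 := cc (pq 2 3 (pq 0 1 y))
  have d4 := cc (pq 0 3 (pq 1 2 y))
  have d5 := cc (pq 0 2 (pq 1 3 y))
  have d6 := cc (pq 0 1 (pq 2 3 y))
  linear_combination (norm := abel) c + a + b - d2 - d3 - d4 - d5 - d6

theorem dis3 (y : QQ) : pq 0 3 (pq 1 2 y) = pq 1 2 (pq 0 3 y) := by
  have c := K4 y
  rw [dis1, dis2] at c
  apply eq_of_cc
  have d3 := cc (pq 2 3 (pq 0 1 y))
  have d1 := cc (pq 1 3 (pq 0 2 y))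
  linear_combination (norm := abel) c - d1 - d3

theorem R42 (i j k : Fin 4) (c : P4) :
    pq j k (pq j k (cl (X i * c))) + pq i k (pq i k (cl (X j * c)))
      + pq i j (pq i j (cl (X k * c))) = 0 := by
  have := DT i j k (X i * X j * X k * c ^ 2)
  rw [show X i * (X i * X j * X k * c ^ 2) = X j * X k * (X i * c) ^ 2 by ring,
    show X j * (X i * X j * X k * c ^ 2) = X i * X k * (X j * c) ^ 2 by ring,
    show X k * (X i * X j * X k * c ^ 2) = X i * X j * (X k * c) ^ 2 by ring,
    cl_pre, cl_pre, cl_pre] at this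
  exact this

theorem R3s (i j k : Fin 4) (y : QQ) :
    pq i j (pq i j (pq i k y)) = pq i k (pq i k (pq i j y)) := by
  obtain ⟨h, rfl⟩ := cl_surj y
  have := R42 i j k (X i * h ^ 2)
  rw [cl_sq, map_zero, map_zero, zero_add, cl_pre', cl_pre', pq_symm j i, pq_symm k i] at this
  exact (eq_of_cc this).symm

theorem R7 (i j k l : Fin 4) (y : QQ) :
    pq j k (pq j k (pq i l y)) + pq i k (pq i k (pq j l y)) + pq i j (pq i j (pq k l y)) = 0 := by
  obtain ⟨h, rfl⟩ := cl_surj y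
  have := R42 i j k (X l * h ^ 2)
  rwa [cl_pre', cl_pre', cl_pre'] at this

def xq (k : Fin 4) : QQ := cl (X k)

theorem R4 (i j k : Fin 4) : pq j k (xq i) + pq i k (xq j) + pq i j (xq k) = 0 := by
  have := DT i j k 1
  rw [mul_one, mul_one, mul_one] at this
  exact this

theorem RY2 (i j k : Fin 4) :
    pq j k (pq j k (xq i)) + pq i k (pq i k (xq j)) + pq i j (pq i j (xq k)) = 0 := by
  have := R42 i j k 1
  rw [mul_one, mul_one, mul_one] at this
  exact this

theorem RY3 (i j k : Fin 4) :
    pq j k (pq j k (pq j k (xq i))) + pq i k (pq i k (pq i k (xq j)))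
      + pq i j (pq i j (pq i j (xq k))) = 0 := by
  have := R42 i j k (X i * X j * X k)
  rw [show (X i * (X i * X j * X k) : P4) = X j * X k * (X i) ^ 2 by ring,
    show (X j * (X i * X j * X k) : P4) = X i * X k * (X j) ^ 2 by ring,
    show (X k * (X i * X j * X k) : P4) = X i * X j * (X k) ^ 2 by ring,
    cl_pre, cl_pre, cl_pre] at this
  exact this

theorem Four (i j k l : Fin 4) (c : P4) :
    pq i j (cl (X k * (X i * X j * X l * c ^ 2)))
      = pq j k (pq j l (cl (X i * c))) + pq i k (pq i l (cl (X j * c))) := by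
  have := DT i j k (X i * X j * X l * c ^ 2)
  rw [show X i * (X i * X j * X l * c ^ 2) = X j * X l * (X i * c) ^ 2 by ring,
    show X j * (X i * X j * X l * c ^ 2) = X i * X l * (X j * c) ^ 2 by ring, cl_pre, cl_pre] at this
  exact (eq_of_cc this).symm

theorem Rv (i j k l : Fin 4) :
    pq j k (pq j k (pq j l (xq i))) + pq i k (pq i k (pq i l (xq j)))
     + (pq i j (pq j k (pq j l (xq i))) + pq i j (pq i k (pq i l (xq j)))) = 0 := by
  have := R42 i j k (X i * X j * X l * 1 ^ 2)
  rw [Four, show X i * (X i * X j * X l * 1 ^ 2) = (X j * X l * (X i) ^ 2 : P4) by ring,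
    show X j * (X i * X j * X l * 1 ^ 2) = (X i * X l * (X j) ^ 2 : P4) by ring, cl_pre, cl_pre,
    mul_one, mul_one, map_add] at this
  exact this

theorem Rdis (i j k l : Fin 4) :
    pq i j (pq i j (pq k l (xq i))) = pq k l (pq k l (pq i j (xq i))) := by
  have a := congrArg (fun y => pq i j (pq i j y)) (R4 i k l)
  have b := congrArg (fun y => pq i k (pq i k y)) (R4 i j l)
  have c := congrArg (fun y => pq i l (pq i l y)) (R4 i j k)
  have d := R7 i k l j (xq i)
  simp only [map_add, map_zero] at a b c
  rw [R3s i j k, R3s i j l] at a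
  rw [R3s i k l] at b
  rw [pq_symm k j, pq_symm l j] at d
  apply eq_of_cc
  have d1 := cc (pq i k (pq i k (pq i j (xq l))))
  have d2 := cc (pq i l (pq i l (pq i j (xq k))))
  have d3 := cc (pq i l (pq i l (pq i k (xq j))))
  have d4 := cc (pq i k (pq i k (pq j l (xq i))))
  have d5 := cc (pq i l (pq i l (pq j k (xq i))))
  linear_combination (norm := abel) a + b + c + d - d1 - d2 - d3 - d4 - d5


/-! ### Words span the kernel of the Kameko map -/

def la : Fin 6 → Fin 4 := ![0, 0, 0, 1, 1, 2]
def lb : Fin 6 → Fin 4 := ![1, 2, 3, 2, 3, 3]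

def Lq (a : Fin 6) : QQ →ₗ[kk] QQ := pq (la a) (lb a)

def wq : List (Fin 6) → Fin 4 → QQ
  | [], k => xq k
  | a :: w, k => Lq a (wq w k)

def WW (s : ℕ) : Submodule kk QQ := Submodule.span kk {y | ∃ w k, w.length = s ∧ y = wq w k}

def nn : ℕ → ℕ
  | 0 => 1
  | s + 1 => 2 * nn s + 2

theorem nn_pos (s : ℕ) : 0 < nn s := by cases s <;> simp [nn]

theorem nn_eq (s : ℕ) : nn s + 2 = 3 * 2 ^ s := by
  induction s with
  | zero => rfl
  | succ s ih => rw [nn, pow_succ]; omega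

theorem pq_self (i : Fin 4) (y : QQ) : pq i i y = 0 := by
  obtain ⟨h, rfl⟩ := cl_surj y
  rw [← cl_pre', cl_sq]

theorem pq_letter (i j : Fin 4) : (∀ y, pq i j y = 0) ∨ ∃ a, pq i j = Lq a := by
  by_cases h : i = j
  · subst h; exact Or.inl (pq_self i)
  · right
    have : ∃ a, (la a = i ∧ lb a = j) ∨ (la a = j ∧ lb a = i) := by revert i j; decide
    obtain ⟨a, ⟨rfl, rfl⟩ | ⟨rfl, rfl⟩⟩ := this
    · exact ⟨a, rfl⟩
    · exact ⟨a, pq_symm _ _⟩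

theorem WW_Lq (s : ℕ) (a : Fin 6) {y : QQ} (hy : y ∈ WW s) : Lq a y ∈ WW (s + 1) := by
  have : WW s ≤ (WW (s + 1)).comap (Lq a) := by
    refine Submodule.span_le.2 ?_
    rintro _ ⟨w, k, hw, rfl⟩
    exact Submodule.subset_span ⟨a :: w, k, by simp [hw], rfl⟩
  exact this hy

theorem WW_pq (s : ℕ) (i j : Fin 4) {y : QQ} (hy : y ∈ WW s) : pq i j y ∈ WW (s + 1) := by
  rcases pq_letter i j with h | ⟨a, h⟩
  · rw [h]; exact Submodule.zero_mem _
  · rw [h]; exact WW_Lq s a hy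

theorem homog_le (n : ℕ) (S : Submodule kk P4)
    (h : ∀ d : Fin 4 →₀ ℕ, d.degree = n → monomial d 1 ∈ S) : homog n ≤ S := by
  intro f hf
  have hf' : f.IsHomogeneous n := (mem_homogeneousSubmodule _ _).1 hf
  rw [f.as_sum]
  refine Submodule.sum_mem _ fun x hx => ?_
  have hx' : x.degree = n := by
    by_contra hne
    exact (mem_support_iff.mp hx) (hf'.coeff_eq_zero hne)
  have : monomial x (coeff x f) = coeff x f • (monomial x 1 : P4) := by
    rw [smul_monomial, smul_eq_mul, mul_one]
  rw [this]
  exact Submodule.smul_mem _ _ (h x hx')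

theorem deg4 (d : Fin 4 →₀ ℕ) : d.degree = d 0 + d 1 + d 2 + d 3 := by
  rw [Finsupp.degree_eq_sum, Fin.sum_univ_four]

theorem mono4 (d : Fin 4 →₀ ℕ) :
    (monomial d 1 : P4) = X 0 ^ d 0 * X 1 ^ d 1 * X 2 ^ d 2 * X 3 ^ d 3 := by
  rw [monomial_eq, Finsupp.prod_fintype _ _ (by simp), Fin.prod_univ_four]
  simp

theorem parity (d : Fin 4 →₀ ℕ) : ∃ h : Fin 4 →₀ ℕ, ∀ i, d i = 2 * h i + d i % 2 := by
  refine ⟨d.mapRange (fun a => a / 2) rfl, fun i => ?_⟩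
  rw [Finsupp.mapRange_apply]; omega

theorem mono_parity (d h : Fin 4 →₀ ℕ) (hh : ∀ i, d i = 2 * h i + d i % 2) :
    (monomial d 1 : P4) = X 0 ^ (d 0 % 2) * X 1 ^ (d 1 % 2) * X 2 ^ (d 2 % 2) * X 3 ^ (d 3 % 2)
      * (monomial h 1) ^ 2 := by
  rw [mono4 d, mono4 h]
  conv_lhs => rw [hh 0, hh 1, hh 2, hh 3]
  ring

theorem cl_mono_sq (h : Fin 4 →₀ ℕ) (hd : 0 < h.degree) : cl ((monomial h 1) ^ 2) = 0 := by
  rw [cl_eq_zero]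
  have : ∃ i, h i ≠ 0 := by
    by_contra hne
    push Not at hne
    rw [deg4] at hd
    simp [hne] at hd
  obtain ⟨i, hi⟩ := this
  have e : (monomial h 1 : P4) = X i * monomial (h - Finsupp.single i 1) 1 := by
    rw [X, monomial_mul, one_mul]
    congr 1
    rw [add_comm, tsub_add_cancel_of_le]
    rw [Finsupp.single_le_iff]; omega
  rw [e]
  exact sqHit' i _

theorem mono_homog {h : Fin 4 →₀ ℕ} {n : ℕ} (hn : h.degree = n) : (monomial h 1 : P4) ∈ homog n :=
  (mem_homogeneousSubmodule _ _).2 (isHomogeneous_monomial 1 hn)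

theorem X_homog {f : P4} {n : ℕ} (i : Fin 4) (hf : f ∈ homog n) : X i * f ∈ homog (n + 1) := by
  have := (isHomogeneous_X kk i).mul ((mem_homogeneousSubmodule _ _).1 hf)
  rw [add_comm] at this
  exact (mem_homogeneousSubmodule _ _).2 this

set_option maxHeartbeats 1000000 in
theorem even_cases (d : Fin 4 →₀ ℕ) (n : ℕ) (hd : d.degree = 2 * n + 2) :
    (cl (monomial d 1) = 0 ∧ ¬ ∀ i, d i % 2 = 1) ∨
    (∃ i j h, monomial d 1 = (X i * X j * (monomial h 1) ^ 2 : P4) ∧ h.degree = n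
      ∧ ¬ ∀ i, d i % 2 = 1) ∨
    (∃ h, monomial d 1 = (X 0 * X 1 * X 2 * X 3 * (monomial h 1) ^ 2 : P4) ∧ h.degree + 1 = n
      ∧ (∀ i, d i % 2 = 1) ∧ ∀ i, d i = 2 * h i + 1) := by
  obtain ⟨h, hh⟩ := parity d
  have hm := mono_parity d h hh
  have hdeg := deg4 h
  have hd4 := deg4 d
  have h0 := hh 0
  have h1 := hh 1
  have h2 := hh 2
  have h3 := hh 3
  have nall : ∀ i, d i % 2 = 0 → ¬ ∀ i, d i % 2 = 1 := fun i hi hc => by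
    have := hc i; omega
  rcases Nat.mod_two_eq_zero_or_one (d 0) with e0 | e0 <;>
  rcases Nat.mod_two_eq_zero_or_one (d 1) with e1 | e1 <;>
  rcases Nat.mod_two_eq_zero_or_one (d 2) with e2 | e2 <;>
  rcases Nat.mod_two_eq_zero_or_one (d 3) with e3 | e3 <;>
  first
  | (exfalso; omega)
  | (rw [e0, e1, e2, e3] at hm
     simp only [pow_zero, pow_one, one_mul, mul_one] at hm
     first
     | (have : d 0 % 2 + d 1 % 2 + d 2 % 2 + d 3 % 2 = 0 := by omega
        left
        refine ⟨?_, nall 0 e0⟩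
        rw [hm]; exact cl_mono_sq h (by omega))
     | (have : d 0 % 2 + d 1 % 2 + d 2 % 2 + d 3 % 2 = 2 := by omega
        right; left
        refine ⟨_, _, h, hm, by omega, ?_⟩
        first | exact nall 0 e0 | exact nall 1 e1 | exact nall 2 e2)
     | (right; right
        have hall : ∀ i, d i % 2 = 1 := by
          intro i; fin_cases i <;> assumption
        refine ⟨h, hm, by omega, hall, fun i => ?_⟩
        have := hh i
        have := hall i
        omega))

theorem others (i j : Fin 4) (hij : i ≠ j) : ∃ k l, ∀ c : P4,
    X k * (X i * X j * X l * c ^ 2) = X 0 * X 1 * X 2 * X 3 * c ^ 2 := by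
  have : ∃ k l, (i, j, k, l) ∈ ({(0,1,2,3),(1,0,2,3),(0,2,1,3),(2,0,1,3),(0,3,1,2),(3,0,1,2),
    (1,2,0,3),(2,1,0,3),(1,3,0,2),(3,1,0,2),(2,3,0,1),(3,2,0,1)} :
      Finset (Fin 4 × Fin 4 × Fin 4 × Fin 4)) := by
    revert i j; decide
  obtain ⟨k, l, h⟩ := this
  refine ⟨k, l, fun c => ?_⟩
  simp only [Finset.mem_insert, Finset.mem_singleton, Prod.mk.injEq] at h
  rcases h with h | h | h | h | h | h | h | h | h | h | h | h <;>
  · obtain ⟨rfl, rfl, rfl, rfl⟩ := h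
    ring

theorem DD (s : ℕ) : ∀ g ∈ homog (nn s), ∀ i j, pq i j (cl g) ∈ WW (s + 1) := by
  induction s with
  | zero =>
    intro g hg i j
    have : homog (nn 0) ≤ (WW 1).comap ((pq i j).comp cl) := by
      apply homog_le
      intro d hd
      have : ∃ k, (monomial d 1 : P4) = X k := by
        have : d.degree = 1 := hd
        rw [deg4] at this
        rw [mono4]
        by_cases h0 : d 0 = 1
        · exact ⟨0, by simp [show d 1 = 0 by omega, show d 2 = 0 by omega, show d 3 = 0 by omega, h0]⟩
        by_cases h1 : d 1 = 1
        · exact ⟨1, by simp [show d 0 = 0 by omega, show d 2 = 0 by omega, show d 3 = 0 by omega, h1]⟩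
        by_cases h2 : d 2 = 1
        · exact ⟨2, by simp [show d 0 = 0 by omega, show d 1 = 0 by omega, show d 3 = 0 by omega, h2]⟩
        · exact ⟨3, by simp [show d 0 = 0 by omega, show d 1 = 0 by omega, show d 2 = 0 by omega,
            show d 3 = 1 by omega]⟩
      obtain ⟨k, hk⟩ := this
      rw [hk]
      exact WW_pq 0 i j (Submodule.subset_span ⟨[], k, rfl, rfl⟩)
    exact this hg
  | succ s ih =>
    intro g hg i j
    have : homog (nn (s + 1)) ≤ (WW (s + 2)).comap ((pq i j).comp cl) := by
      apply homog_le
      intro d hd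
      rw [Submodule.mem_comap, LinearMap.comp_apply]
      rcases even_cases d (nn s) hd with ⟨h, _⟩ | ⟨k, l, h, e, hh, _⟩ | ⟨h, e, hh, _⟩
      · rw [h, map_zero]; exact Submodule.zero_mem _
      · rw [e, cl_pre]
        exact WW_pq _ _ _ (ih _ (mono_homog hh) k l)
      · by_cases hij : i = j
        · subst hij; rw [pq_self]; exact Submodule.zero_mem _
        obtain ⟨k, l, hkl⟩ := others i j hij
        rw [e, ← hkl, Four]
        have hx : ∀ i, X i * monomial h 1 ∈ homog (nn s) := fun i => by
          rw [← hh]; exact X_homog i (mono_homog rfl)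
        exact Submodule.add_mem _ (WW_pq _ _ _ (ih _ (hx i) j l)) (WW_pq _ _ _ (ih _ (hx j) i l))
    exact this hg

theorem kameko_mono (d : Fin 4 →₀ ℕ) : kameko (monomial d 1) =
    open scoped Classical in if ∀ i, d i % 2 = 1 then monomial (halfExp d) 1 else 0 := by
  have := (basisMonomials (Fin 4) kk).constr_basis kk (fun d =>
    open scoped Classical in 
    if ∀ i, d i % 2 = 1 then (monomial (halfExp d) 1 : P4) else 0) d
  rw [coe_basisMonomials] at this
  exact this

/-- The up Kameko map composed with the projection. -/
def upQ : P4 →ₗ[kk] QQ where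
  toFun g := cl (X 0 * X 1 * X 2 * X 3 * g ^ 2)
  map_add' f g := by rw [CharTwo.add_sq, mul_add, map_add]
  map_smul' a f := by
    have : a ^ 2 = a := by revert a; decide
    rw [smul_pow, mul_smul_comm, this, map_smul]; rfl

theorem kstep (s : ℕ) {f : P4} (hf : f ∈ homog (nn (s + 1))) :
    cl f - upQ (kameko f) ∈ WW (s + 1) := by
  have : homog (nn (s + 1)) ≤ (WW (s + 1)).comap (cl - upQ.comp kameko) := by
    apply homog_le
    intro d hd
    rw [Submodule.mem_comap, LinearMap.sub_apply, LinearMap.comp_apply, kameko_mono]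
    rcases even_cases d (nn s) hd with ⟨h, h2⟩ | ⟨k, l, h, e, hh, h2⟩ | ⟨h, e, hh, h2, h3⟩
    · rw [h, if_neg h2, map_zero, sub_zero]; exact Submodule.zero_mem _
    · rw [if_neg h2, map_zero, sub_zero, e, cl_pre]
      exact DD s _ (mono_homog hh) k l
    · rw [if_pos h2]
      have : halfExp d = h := by
        ext i
        rw [halfExp, Finsupp.mapRange_apply, h3 i]; omega
      rw [this, e]
      change cl _ - cl _ ∈ _
      rw [sub_self]; exact Submodule.zero_mem _
  exact this hf

theorem upQ_hit (s m : ℕ) (hm : m + 1 = nn s) {g : P4} (hg : g ∈ hitSub m) :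
    upQ g ∈ WW (s + 1) := by
  have : hitSub m ≤ (WW (s + 1)).comap upQ := by
    refine Submodule.span_le.2 ?_
    rintro _ ⟨d, hd, h, hh, rfl⟩
    have hh' := (mem_homogeneousSubmodule _ _).1 hh
    rw [comp_sqTotal_lt hh' hd.le]
    obtain ⟨t, ht⟩ : ∃ t, m - d = t + 1 := ⟨m - d - 1, by omega⟩
    rw [ht]
    have key := SqO_four t h
    rw [← cl_eq_zero] at key
    have hx : ∀ i j, X i * X j * SqO t h ∈ homog (nn s) := fun i j => by
      have e : nn s = (d + t) + 1 + 1 := by omega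
      rw [e, mul_assoc]
      exact X_homog _ (X_homog _ ((mem_homogeneousSubmodule _ _).2 (SqO_hom hh' t)))
    have hz : ∀ i j k l, cl (X k * X l * (X i * X j * SqO t h) ^ 2) ∈ WW (s + 1) :=
      fun i j k l => by
        rw [cl_pre]; exact DD s _ (hx i j) k l
    simp only [map_add] at key
    change cl (X 0 * X 1 * X 2 * X 3 * SqO (t + 1) h ^ 2) ∈ WW (s + 1)
    have z := Submodule.zero_mem (WW (s + 1))
    rw [← key] at z
    rw [Submodule.add_mem_iff_left _ (hz _ _ _ _), Submodule.add_mem_iff_left _ (hz _ _ _ _),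
      Submodule.add_mem_iff_left _ (hz _ _ _ _), Submodule.add_mem_iff_left _ (hz _ _ _ _),
      Submodule.add_mem_iff_left _ (hz _ _ _ _), Submodule.add_mem_iff_left _ (hz _ _ _ _)] at z
    exact z
  exact this hg

theorem ker_words (s m : ℕ) (hm : m + 1 = nn s) {f : P4} (hf : f ∈ homog (nn (s + 1)))
    (hk : kameko f ∈ hitSub m) : cl f ∈ WW (s + 1) := by
  have := Submodule.add_mem _ (kstep s hf) (upQ_hit s m hm hk)
  rwa [sub_add_cancel] at this


set_option linter.unusedSimpArgs false
/-! ### Spike functionals -/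

theorem choose_even (a : ℕ) : ∀ d k : ℕ, d + k + 1 = 2 ^ a → 0 < k → ((d.choose k : ℕ) : kk) = 0 := by
  induction a with
  | zero => intro d k h hk; simp at h; omega
  | succ a ih =>
    intro d k h hk
    have : Fact (Nat.Prime 2) := ⟨Nat.prime_two⟩
    have lucas := Choose.choose_modEq_choose_mod_mul_choose_div_nat (n := d) (k := k) (p := 2)
    have l2 := (ZMod.natCast_eq_natCast_iff _ _ 2).2 lucas
    rw [l2, Nat.cast_mul]
    rw [pow_succ] at h
    rcases Nat.mod_two_eq_zero_or_one k with hk2 | hk2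
    · rw [ih (d / 2) (k / 2) (by omega) (by omega), mul_zero]
    · rw [hk2, show d % 2 = 0 by omega]; simp

theorem spike (e a d : Fin 4 →₀ ℕ) (he : ∀ i, e i + 1 = 2 ^ a i) (hd : d.degree < e.degree) :
    coeff e (sqTotal (monomial d 1)) = 0 := by
  have h1 : sqTotal (monomial d 1) = ∏ i : Fin 4, ∑ k ∈ Finset.range (d i + 1),
      (C ((d i).choose k : kk) * X i ^ (d i + k) : P4) := by
    rw [mono4, Fin.prod_univ_four]
    have : ∀ i : Fin 4, (X i + X i ^ 2 : P4) ^ d i = ∑ k ∈ Finset.range (d i + 1),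
      (C ((d i).choose k : kk) * X i ^ (d i + k) : P4) := by
      intro i
      rw [show (X i + X i ^ 2 : P4) = X i * (X i + 1) by ring, mul_pow, add_pow, Finset.mul_sum]
      refine Finset.sum_congr rfl fun k _ => ?_
      rw [one_pow, mul_one, pow_add, map_natCast]; ring
    simp only [map_mul, map_pow, ← this]
    simp [sqTotal]
  rw [h1, Finset.prod_univ_sum, coeff_sum]
  refine Finset.sum_eq_zero fun x hx => ?_
  rw [Finset.prod_mul_distrib, ← map_prod C, coeff_C_mul]
  have h2 : ∏ i, (X i ^ (d i + x i) : P4)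
      = monomial (Finsupp.equivFunOnFinite.symm fun i => d i + x i) 1 := by
    rw [mono4, Fin.prod_univ_four]; rfl
  rw [h2, coeff_monomial]
  split_ifs with h
  · rw [mul_one]
    have hi : ∀ i, d i + x i = e i := fun i => by rw [← h]; rfl
    have : ∃ i, 0 < x i := by
      by_contra hne
      push Not at hne
      rw [deg4, deg4] at hd
      have := hi 0; have := hi 1; have := hi 2; have := hi 3
      have := hne 0; have := hne 1; have := hne 2; have := hne 3
      omega
    obtain ⟨i, hpos⟩ := this
    refine Finset.prod_eq_zero (Finset.mem_univ i) ?_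
    exact choose_even (a i) _ _ (by rw [hi, he]) hpos
  · rw [mul_zero]

theorem spike_SqO (e a : Fin 4 →₀ ℕ) (he : ∀ i, e i + 1 = 2 ^ a i) (t : ℕ) (ht : 0 < t) (f : P4) :
    coeff e (SqO t f) = 0 := by
  rw [f.as_sum, SqO_sum, coeff_sum]
  refine Finset.sum_eq_zero fun d _ => ?_
  have hc : coeff d f = 0 ∨ coeff d f = 1 := by
    generalize coeff d f = c; revert c; decide
  rcases hc with hc | hc
  · rw [hc]; simp [SqO]
  · rw [hc, ← comp_sqTotal (isHomogeneous_monomial 1 rfl), coeff_homogeneousComponent]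
    split_ifs with h
    · exact spike e a d he (by omega)
    · rfl

theorem subst_St (M : Matrix (Fin 4) (Fin 4) kk) (f : P4) :
    St (substM M f) = (St f).map (substM M : P4 →+* P4) := by
  have : St.comp (substM M) = (Polynomial.mapAlgHom (substM M)).comp St := by
    apply MvPolynomial.algHom_ext
    intro i
    have hs : ∀ a : kk, a ^ 2 = a := by decide
    have hmap : ∀ p, Polynomial.mapAlgHom (substM M) p = p.map (substM M : P4 →+* P4) :=
      fun _ => rfl
    have hX : substM M (X i) = ∑ j, M i j • X j := by simp [substM]
    simp only [AlgHom.comp_apply, hX, map_sum, map_smul, St_X, hmap,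
      Polynomial.map_add, Polynomial.map_mul, Polynomial.map_X, Polynomial.map_C]
    simp only [AlgHom.coe_toRingHom, RingHom.coe_coe, hX, map_pow, map_sum, map_smul, smul_add,
      Finset.sum_add_distrib]
    congr 1
    · simp only [Polynomial.smul_C]
    · rw [CharTwo.sum_sq, Finset.mul_sum]
      refine Finset.sum_congr rfl fun j _ => ?_
      rw [← Polynomial.smul_C, smul_pow, hs, mul_smul_comm]
  exact DFunLike.congr_fun this f

theorem subst_SqO (M : Matrix (Fin 4) (Fin 4) kk) (t : ℕ) (f : P4) :
    substM M (SqO t f) = SqO t (substM M f) := by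
  rw [SqO, SqO, subst_St, Polynomial.coeff_map]; rfl

theorem subst_Hit_coeff (M : Matrix (Fin 4) (Fin 4) kk) (e a : Fin 4 →₀ ℕ)
    (he : ∀ i, e i + 1 = 2 ^ a i) {f : P4} (hf : f ∈ Hit) : coeff e (substM M f) = 0 := by
  have hspan : ∀ n, hitSub n ≤ LinearMap.ker ((lcoeff kk e).comp (substM M).toLinearMap) := by
    intro n
    refine Submodule.span_le.2 ?_
    rintro _ ⟨d, hd, h, hh, rfl⟩
    rw [comp_sqTotal_lt ((mem_homogeneousSubmodule _ _).1 hh) hd.le]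
    change coeff e (substM M _) = 0
    rw [subst_SqO]
    exact spike_SqO e a he _ (by omega) _
  rw [← sum_homogeneousComponent f, map_sum, coeff_sum]
  exact Finset.sum_eq_zero fun n _ => hspan n (mem_Hit.1 hf n)

def NM (v w : Fin 4 → kk) : Matrix (Fin 4) (Fin 4) kk := fun i => ![v i, w i, 0, 0]

theorem subst_NM (v w : Fin 4 → kk) (i : Fin 4) :
    substM (NM v w) (X i) = v i • X 0 + w i • X 1 := by
  simp [substM, NM, Fin.sum_univ_four]

def ee : ℕ → (Fin 4 →₀ ℕ)
  | 0 => Finsupp.single 0 1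
  | s + 1 => 2 • ee s + (Finsupp.single 0 1 + Finsupp.single 1 1)

theorem ee_spike (s : ℕ) : ∃ a : Fin 4 →₀ ℕ, ∀ i, ee s i + 1 = 2 ^ a i := by
  refine ⟨Finsupp.equivFunOnFinite.symm ![s + 1, s, 0, 0], ?_⟩
  induction s with
  | zero => intro i; fin_cases i <;> simp [ee]
  | succ s ih =>
    intro i
    have := ih i
    fin_cases i <;> simp [ee, pow_succ] at this ⊢ <;> omega

def psi (v w : Fin 4 → kk) (s : ℕ) : P4 →ₗ[kk] kk :=
  (lcoeff kk (ee s)).comp (substM (NM v w)).toLinearMap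

theorem psi_apply (v w : Fin 4 → kk) (s : ℕ) (f : P4) :
    psi v w s f = coeff (ee s) (substM (NM v w) f) := rfl

def psiQ (v w : Fin 4 → kk) (s : ℕ) : QQ →ₗ[kk] kk :=
  Hit.liftQ (psi v w s) fun _ hf => by
    obtain ⟨a, ha⟩ := ee_spike s
    exact subst_Hit_coeff _ _ a ha hf

theorem psiQ_cl (v w : Fin 4 → kk) (s : ℕ) (f : P4) : psiQ v w s (cl f) = psi v w s f := rfl

theorem psiQ_x (v w : Fin 4 → kk) (k : Fin 4) : psiQ v w 0 (xq k) = v k := by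
  rw [xq, psiQ_cl, psi_apply, subst_NM, ee, coeff_add, coeff_smul, coeff_smul, coeff_X, coeff_X]
  have h : ¬ (Finsupp.single (1 : Fin 4) 1 = Finsupp.single (0 : Fin 4) 1) := by
    intro h
    have := DFunLike.congr_fun h 0
    simp at this
  simp [h]

theorem coeff_sq_even (F : P4) (e : Fin 4 →₀ ℕ) : coeff (2 • e) (F ^ 2) = coeff e F := by
  have : Fact (Nat.Prime 2) := ⟨Nat.prime_two⟩
  rw [← expand_zmod, coeff_expand_smul 2 (by norm_num)]

theorem coeff_sq_odd (F : P4) (e : Fin 4 →₀ ℕ) (i : Fin 4) (h : ¬ 2 ∣ e i) :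
    coeff e (F ^ 2) = 0 := by
  have : Fact (Nat.Prime 2) := ⟨Nat.prime_two⟩
  rw [← expand_zmod, coeff_expand_of_not_dvd _ h]

theorem psiQ_pq (v w : Fin 4 → kk) (s : ℕ) (i j : Fin 4) (y : QQ) :
    psiQ v w (s + 1) (pq i j y) = (v i * w j + w i * v j) * psiQ v w s y := by
  obtain ⟨f, rfl⟩ := cl_surj y
  rw [← cl_pre, psiQ_cl, psiQ_cl, psi_apply, psi_apply, map_mul, map_mul, map_pow, subst_NM, subst_NM]
  generalize substM (NM v w) f = F
  have e : (v i • X 0 + w i • X 1) * (v j • X 0 + w j • X 1) * F ^ 2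
      = (v i * v j) • (X 0 * F) ^ 2 + (w i * w j) • (X 1 * F) ^ 2 +
        (v i * w j + w i * v j) • ((monomial (Finsupp.single 0 1 + Finsupp.single 1 1) 1) * F ^ 2) := by
    have : (monomial (Finsupp.single 0 1 + Finsupp.single 1 1) 1 : P4) = X 0 * X 1 := by
      rw [X, X, monomial_mul, one_mul]
    rw [this]
    simp only [smul_eq_C_mul, C_add, C_mul]
    ring
  have hodd : ¬ 2 ∣ ee (s + 1) 0 := by
    simp [ee]
  rw [e, coeff_add, coeff_add, coeff_smul, coeff_smul, coeff_smul, coeff_sq_odd _ _ 0 hodd,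
    coeff_sq_odd _ _ 0 hodd, ee, add_comm (2 • ee s), coeff_monomial_mul, coeff_sq_even]
  simp

theorem subst_mul (M N : Matrix (Fin 4) (Fin 4) kk) (f : P4) :
    substM N (substM M f) = substM (M * N) f := by
  have : (substM N).comp (substM M) = substM (M * N) := by
    apply MvPolynomial.algHom_ext
    intro i
    simp only [AlgHom.comp_apply, substM, aeval_X, map_sum, map_smul, Matrix.mul_apply,
      Finset.sum_smul, Finset.smul_sum, smul_smul]
    rw [Finset.sum_comm]
  exact DFunLike.congr_fun this f

theorem mul_NM (M : Matrix (Fin 4) (Fin 4) kk) (v w : Fin 4 → kk) :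
    M * NM v w = NM (M.mulVec v) (M.mulVec w) := by
  ext i j
  simp only [Matrix.mul_apply, NM, Matrix.mulVec, dotProduct]
  fin_cases j <;> simp

def GInv (f : P4) : Prop := ∀ M : Matrix (Fin 4) (Fin 4) kk, IsUnit M → substM M f - f ∈ Hit

theorem psi_inv {f : P4} (hf : GInv f) (M : Matrix (Fin 4) (Fin 4) kk) (hM : IsUnit M)
    (v w : Fin 4 → kk) (s : ℕ) :
    psiQ (M.mulVec v) (M.mulVec w) s (cl f) = psiQ v w s (cl f) := by
  have h : cl (substM M f) = cl f := by
    rw [← sub_eq_zero, ← map_sub, cl_eq_zero]; exact hf M hM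
  rw [← h, psiQ_cl v w, psi_apply, subst_mul, mul_NM, h]; rfl

theorem psi_trans {f : P4} (hf : GInv f) (u α : Fin 4 → kk) (hu : α ⬝ᵥ u = 0)
    (v w : Fin 4 → kk) (s : ℕ) :
    psiQ (v + (α ⬝ᵥ v) • u) (w + (α ⬝ᵥ w) • u) s (cl f) = psiQ v w s (cl f) := by
  have hmv : ∀ v, (1 + Matrix.vecMulVec u α).mulVec v = v + (α ⬝ᵥ v) • u := by
    intro v
    rw [Matrix.add_mulVec, Matrix.one_mulVec, Matrix.vecMulVec_mulVec]
    congr 1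
    exact op_smul_eq_smul _ _
  have hM : IsUnit (1 + Matrix.vecMulVec u α) := by
    apply IsUnit.of_mul_eq_one (1 + Matrix.vecMulVec u α)
    rw [mul_add, mul_one, add_mul, one_mul, Matrix.vecMulVec_mul_vecMulVec, hu]
    simp only [zero_smul, Matrix.vecMulVec_zero, add_zero]
    rw [add_assoc]
    have : Matrix.vecMulVec u α + Matrix.vecMulVec u α = 0 := by
      ext i j; exact CharTwo.add_self_eq_zero _
    rw [this, add_zero]
  have := psi_inv hf _ hM v w s
  rwa [hmv, hmv] at this

theorem psiQ_Lq (v w : Fin 4 → kk) (s : ℕ) (a : Fin 6) (y : QQ) :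
    psiQ v w (s + 1) (Lq a y) = (v (la a) * w (lb a) + w (la a) * v (lb a)) * psiQ v w s y :=
  psiQ_pq _ _ _ _ _ _

theorem psi_dep (v w : Fin 4 → kk) (h : ∀ i j, v i * w j + w i * v j = 0) (s : ℕ) {y : QQ}
    (hy : y ∈ WW (s + 1)) : psiQ v w (s + 1) y = 0 := by
  have : WW (s + 1) ≤ LinearMap.ker (psiQ v w (s + 1)) := by
    refine Submodule.span_le.2 ?_
    rintro _ ⟨_ | ⟨a, l⟩, k, hw, rfl⟩
    · simp at hw
    · change psiQ v w (s + 1) (Lq a (wq l k)) = 0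
      rw [psiQ_Lq, h, zero_mul]
  exact this hy

theorem psi_sum (v w : Fin 4 → kk) (s : ℕ) {y : QQ} (hy : y ∈ WW s) :
    psiQ v w s y + psiQ w v s y + psiQ (v + w) w s y = 0 := by
  have : WW s ≤ LinearMap.ker (psiQ v w s + psiQ w v s + psiQ (v + w) w s) := by
    refine Submodule.span_le.2 ?_
    rintro _ ⟨l, k, rfl, rfl⟩
    clear hy
    change psiQ v w l.length (wq l k) + psiQ w v l.length (wq l k)
      + psiQ (v + w) w l.length (wq l k) = 0
    induction l with
    | nil =>
      change psiQ v w 0 (xq k) + psiQ w v 0 (xq k) + psiQ (v + w) w 0 (xq k) = 0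
      rw [psiQ_x, psiQ_x, psiQ_x, Pi.add_apply]
      generalize v k = a
      generalize w k = b
      revert a b; decide
    | cons a l ih =>
      change psiQ v w (l.length + 1) (Lq a (wq l k)) + psiQ w v (l.length + 1) (Lq a (wq l k))
        + psiQ (v + w) w (l.length + 1) (Lq a (wq l k)) = 0
      rw [psiQ_Lq, psiQ_Lq, psiQ_Lq]
      have e1 : w (la a) * v (lb a) + v (la a) * w (lb a) =
        v (la a) * w (lb a) + w (la a) * v (lb a) := by ring
      have e2 : (v + w) (la a) * w (lb a) + w (la a) * (v + w) (lb a)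
         = v (la a) * w (lb a) + w (la a) * v (lb a) := by
        simp only [Pi.add_apply]
        generalize v (la a) = a1
        generalize w (la a) = b1
        generalize v (lb a) = c1
        generalize w (lb a) = d1
        revert a1 b1 c1 d1; decide
      rw [e1, e2, ← mul_add, ← mul_add, ih, mul_zero]
  exact this hy

theorem psi_zero {f : P4} (hf : GInv f) (s : ℕ) (hy : cl f ∈ WW (s + 1)) (v w : Fin 4 → kk) :
    psiQ v w (s + 1) (cl f) = 0 := by
  by_cases h : ∀ i j, v i * w j + w i * v j = 0
  · exact psi_dep v w h s hy
  push Not at h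
  obtain ⟨i, j, hij⟩ := h
  have one : ∀ a : kk, a ≠ 0 → a = 1 := by decide
  have hij := one _ hij
  have t2 : ∀ a : kk, a + a = 0 := by decide
  set α : Fin 4 → kk := w j • Pi.single i 1 + w i • Pi.single j 1 with hα
  set β : Fin 4 → kk := v j • Pi.single i 1 + v i • Pi.single j 1 with hβ
  have a1 : α ⬝ᵥ v = 1 := by
    rw [← hij, hα]; simp; ring
  have a2 : α ⬝ᵥ w = 0 := by
    rw [hα, ← t2 (w i * w j)]; simp; ring
  have b1 : β ⬝ᵥ w = 1 := by
    rw [← hij, hβ]; simp; ring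
  have b2 : β ⬝ᵥ v = 0 := by
    rw [hβ, ← t2 (v i * v j)]; simp; ring
  have c1 := psi_trans hf w α a2 v w (s + 1)
  rw [a1, a2, one_smul, zero_smul, add_zero] at c1
  have c2 := psi_trans hf (v + w) (α + β) (by
    rw [add_dotProduct, dotProduct_add, dotProduct_add, a1, a2, b1, b2]; decide) v w (s + 1)
  have hvv : v + (v + w) = w := by
    ext i; simp only [Pi.add_apply]; rw [← add_assoc, t2, zero_add]
  have hww : w + (v + w) = v := by
    rw [add_comm v w, ← add_assoc]
    ext i; simp only [Pi.add_apply]; rw [t2, zero_add]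
  rw [add_dotProduct α β v, add_dotProduct α β w, a1, a2, b1, b2, add_zero, zero_add, one_smul, hvv, hww] at c2
  have := psi_sum v w (s + 1) hy
  rw [c1, c2, t2, zero_add] at this
  exact this


/-! ### Words depend only on their support -/

theorem sh2 (i j k : Fin 4) (y : QQ) : pq i j (pq j k y) = pq j k (pq i j y) := by
  rw [pq_symm i j]; exact sh1 j i k y
theorem sh3 (i j k : Fin 4) (y : QQ) : pq i j (pq k i y) = pq k i (pq i j y) := by
  rw [pq_symm k i]; exact sh1 i j k y
theorem sh4 (i j k : Fin 4) (y : QQ) : pq i j (pq k j y) = pq k j (pq i j y) := by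
  rw [pq_symm i j, pq_symm k j]; exact sh1 j i k y

theorem Lcomm (a b : Fin 6) (y : QQ) : Lq a (Lq b y) = Lq b (Lq a y) := by
  by_cases h : la a = la b ∨ la a = lb b ∨ lb a = la b ∨ lb a = lb b
  · unfold Lq
    rcases h with h | h | h | h
    · rw [h]; exact sh1 _ _ _ y
    · rw [h]; exact sh3 _ _ _ y
    · rw [h]; exact sh2 _ _ _ y
    · rw [h]; exact sh4 _ _ _ y
  · have : (a = 0 ∧ b = 5) ∨ (a = 5 ∧ b = 0) ∨ (a = 1 ∧ b = 4) ∨ (a = 4 ∧ b = 1) ∨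
        (a = 2 ∧ b = 3) ∨ (a = 3 ∧ b = 2) := by
      revert a b; decide
    rcases this with h | h | h | h | h | h <;> obtain ⟨rfl, rfl⟩ := h
    · exact dis1 y
    · exact (dis1 y).symm
    · exact dis2 y
    · exact (dis2 y).symm
    · exact dis3 y
    · exact (dis3 y).symm

theorem wq_perm {w w' : List (Fin 6)} (h : w.Perm w') (k : Fin 4) : wq w k = wq w' k := by
  induction h with
  | nil => rfl
  | cons a _ ih => exact congrArg (Lq a) ih
  | swap a b l => exact Lcomm b a _
  | trans _ _ h1 h2 => rw [h1, h2]

theorem ts1 (i j k : Fin 4) (y : QQ) :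
    pq i j (pq i j (pq j k y)) = pq j k (pq j k (pq i j y)) := by
  rw [pq_symm i j]; exact R3s j i k y
theorem ts2 (i j k : Fin 4) (y : QQ) :
    pq i j (pq i j (pq k i y)) = pq k i (pq k i (pq i j y)) := by
  rw [pq_symm k i]; exact R3s i j k y
theorem ts3 (i j k : Fin 4) (y : QQ) :
    pq i j (pq i j (pq k j y)) = pq k j (pq k j (pq i j y)) := by
  rw [pq_symm i j, pq_symm k j]; exact R3s j i k y

theorem td1 (i j k l : Fin 4) :
    pq i j (pq i j (pq k l (xq j))) = pq k l (pq k l (pq i j (xq j))) := by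
  rw [pq_symm i j]; exact Rdis j i k l

theorem tri (a b : Fin 6) (k : Fin 4) :
    wq [a, a, b] k = wq [b, b, a] k := by
  by_cases h : la a = la b ∨ la a = lb b ∨ lb a = la b ∨ lb a = lb b
  · change Lq a (Lq a (Lq b _)) = Lq b (Lq b (Lq a _))
    unfold Lq
    rcases h with h | h | h | h
    · rw [h]; exact R3s _ _ _ _
    · rw [h]; exact ts2 _ _ _ _
    · rw [h]; exact ts1 _ _ _ _
    · rw [h]; exact ts3 _ _ _ _
  · have : k = la a ∨ k = lb a ∨ k = la b ∨ k = lb b := by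
      revert a b k; decide
    change Lq a (Lq a (Lq b _)) = Lq b (Lq b (Lq a _))
    unfold Lq
    rcases this with rfl | rfl | rfl | rfl
    · exact Rdis _ _ _ _
    · exact td1 _ _ _ _
    · exact (Rdis _ _ _ _).symm
    · exact (td1 _ _ _ _).symm

theorem wq_append (w u u' : List (Fin 6)) (k k' : Fin 4) (h : wq u k = wq u' k') :
    wq (w ++ u) k = wq (w ++ u') k' := by
  induction w with
  | nil => exact h
  | cons a w ih => exact congrArg (Lq a) ih

theorem contract (a b : Fin 6) (w : List (Fin 6)) (k : Fin 4) (ha : a ∈ w) (hb : b ∈ w) :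
    wq (a :: w) k = wq (b :: w) k := by
  by_cases hab : a = b
  · rw [hab]
  have h1 := List.perm_cons_erase ha
  have hb' : b ∈ w.erase a := (List.mem_erase_of_ne (Ne.symm hab)).2 hb
  have h2 := List.perm_cons_erase hb'
  set u := (w.erase a).erase b with hu
  have hw : w.Perm (a :: b :: u) := h1.trans (h2.cons a)
  have e1 : (a :: w).Perm (u ++ [a, a, b]) :=
    (hw.cons a).trans (List.perm_append_comm (l₁ := [a, a, b]) (l₂ := u))
  have e2 : (b :: w).Perm (u ++ [b, b, a]) := by
    refine (hw.cons b).trans (List.Perm.trans ?_ (List.perm_append_comm (l₁ := [b, b, a]) (l₂ := u)))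
    exact (List.Perm.swap _ _ _).cons _
  rw [wq_perm e1, wq_perm e2]
  exact wq_append u _ _ k k (tri a b k)

def letters (S : ℕ) : List (Fin 6) := (List.finRange 6).filter fun a => S.testBit a

def padl (s S : ℕ) : List (Fin 6) :=
  match letters S with
  | [] => []
  | a :: t => List.replicate (s - (t.length + 1)) a ++ a :: t

def pmask (w : List (Fin 6)) : ℕ := w.foldr (fun a m => 2 ^ (a : ℕ) ||| m) 0

def val (s S : ℕ) (k : Fin 4) : QQ := wq (padl s S) k

theorem pmask_testBit (w : List (Fin 6)) (i : ℕ) :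
    (pmask w).testBit i = true ↔ ∃ a ∈ w, (a : ℕ) = i := by
  induction w with
  | nil => simp [pmask]
  | cons a w ih =>
    change (2 ^ (a : ℕ) ||| pmask w).testBit i = true ↔ _
    rw [Nat.testBit_or, Bool.or_eq_true, ih, Nat.testBit_two_pow]
    simp

theorem mem_letters (S : ℕ) (a : Fin 6) : a ∈ letters S ↔ S.testBit a = true := by
  simp [letters]

theorem mem_letters_pmask (w : List (Fin 6)) (a : Fin 6) : a ∈ letters (pmask w) ↔ a ∈ w := by
  rw [mem_letters, pmask_testBit]
  constructor
  · rintro ⟨b, hb, h⟩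
    rwa [← Fin.ext h]
  · intro h; exact ⟨a, h, rfl⟩

theorem letters_nodup (S : ℕ) : (letters S).Nodup := (List.nodup_finRange 6).filter _

theorem pmask_lt (w : List (Fin 6)) : pmask w < 64 := by
  apply Nat.lt_pow_two_of_testBit (n := 6)
  intro i hi
  rw [Bool.eq_false_iff]
  intro h
  obtain ⟨a, _, ha⟩ := (pmask_testBit w i).1 h
  omega

theorem letters_le (w : List (Fin 6)) : (letters (pmask w)).length ≤ w.length :=
  ((letters_nodup _).subperm fun a h => (mem_letters_pmask w a).1 h).length_le

theorem canon_aux (l r : List (Fin 6)) (a : Fin 6) (ha : a ∈ l) (hr : ∀ b ∈ r, b ∈ l) (k : Fin 4) :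
    wq (r ++ l) k = wq (List.replicate r.length a ++ l) k := by
  induction r with
  | nil => rfl
  | cons b r ih =>
    have h1 : wq (b :: (r ++ l)) k = wq (a :: (r ++ l)) k :=
      contract b a _ k (List.mem_append_right _ (hr b (by simp))) (List.mem_append_right _ ha)
    have h2 := ih fun b hb => hr b (List.mem_cons_of_mem _ hb)
    calc wq (b :: r ++ l) k = wq (a :: (r ++ l)) k := h1
      _ = Lq a (wq (r ++ l) k) := rfl
      _ = _ := by rw [h2]; rfl

theorem canon (w : List (Fin 6)) (k : Fin 4) : wq w k = val w.length (pmask w) k := by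
  have hsub : (letters (pmask w)).Subperm w :=
    (letters_nodup _).subperm fun a h => (mem_letters_pmask w a).1 h
  obtain ⟨r, hr⟩ : ∃ r, w.Perm (r ++ letters (pmask w)) := by
    obtain ⟨l, h1, h2⟩ := hsub
    obtain ⟨r, hr⟩ := h2.exists_perm_append
    exact ⟨r, hr.trans (List.perm_append_comm.trans ((List.Perm.refl r).append h1))⟩
  unfold val padl
  have hmem := mem_letters_pmask w
  have hlen := hr.length_eq
  rw [wq_perm hr]
  generalize letters (pmask w) = l at *
  rcases l with _ | ⟨a, t⟩
  · rcases w with _ | ⟨b, w⟩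
    · simp at hlen
      rw [List.length_eq_zero_iff.1 hlen.symm]; rfl
    · exact absurd ((hmem b).2 (by simp)) (by simp)
  · rw [canon_aux (a :: t) r a (by simp) (fun b hb => (hmem b).2 (hr.symm.subset
      (List.mem_append_left _ hb)))]
    have : w.length - (t.length + 1) = r.length := by
      rw [hlen]; simp
    rw [← this]

theorem padl_length (s S : ℕ) (h : (letters S).length ≤ s) (h0 : 0 < (letters S).length) :
    (padl s S).length = s := by
  unfold padl
  generalize letters S = l at *
  rcases l with _ | ⟨a, t⟩
  · simp at h0
  · simp at h ⊢; omega

theorem mem_padl (s S : ℕ) (a : Fin 6) : a ∈ padl s S ↔ a ∈ letters S := by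
  unfold padl
  generalize letters S = l
  rcases l with _ | ⟨b, t⟩
  · simp
  · simp only [List.mem_append, List.mem_replicate, List.mem_cons]; tauto

theorem pmask_padl (s S : ℕ) (hS : S < 64) : pmask (padl s S) = S := by
  apply Nat.eq_of_testBit_eq
  intro i
  rw [Bool.eq_iff_iff, pmask_testBit]
  constructor
  · rintro ⟨a, ha, rfl⟩
    rwa [mem_padl, mem_letters] at ha
  · intro h
    have hi : i < 6 := by
      by_contra hi
      have : S < 2 ^ i := lt_of_lt_of_le hS (Nat.pow_le_pow_right (n := 2) (by norm_num) (not_lt.1 hi))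
      rw [Nat.testBit_lt_two_pow this] at h
      simp at h
    exact ⟨⟨i, hi⟩, (mem_padl _ _ _).2 ((mem_letters _ _).2 h), rfl⟩


/-! ### Bitmask linear algebra -/

def gv (s i : ℕ) : QQ := val s (i / 4) ⟨i % 4, Nat.mod_lt _ (by norm_num)⟩

def ev (s m : ℕ) : QQ := ∑ i ∈ Finset.range 256, if m.testBit i then gv s i else 0

theorem ev_xor (s m n : ℕ) : ev s (m ^^^ n) = ev s m + ev s n := by
  unfold ev
  rw [← Finset.sum_add_distrib]
  refine Finset.sum_congr rfl fun i _ => ?_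
  rw [Nat.testBit_xor]
  cases m.testBit i <;> cases n.testBit i <;> simp [cc]

theorem ev_zero (s : ℕ) : ev s 0 = 0 := by simp [ev]

def gm (S k : ℕ) : ℕ := 2 ^ (4 * S + k)

theorem ev_gm (s S : ℕ) (k : Fin 4) (hS : S < 64) : ev s (gm S k) = val s S k := by
  unfold ev gm
  rw [Finset.sum_eq_single (4 * S + k)]
  · have h1 : (4 * S + (k : ℕ)) / 4 = S := by omega
    have h2 : (4 * S + (k : ℕ)) % 4 = k := by omega
    rw [Nat.testBit_two_pow, decide_eq_true rfl, if_pos rfl]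
    simp only [gv, h1, h2]
  · intro b _ hb
    rw [Nat.testBit_two_pow, decide_eq_false (Ne.symm hb)]; simp
  · intro h
    exfalso; apply h; rw [Finset.mem_range]; omega

def r4 (A : ℕ) : List ℕ :=
  [gm (1 ||| A) 2 ^^^ gm (2 ||| A) 1 ^^^ gm (8 ||| A) 0,
   gm (1 ||| A) 3 ^^^ gm (4 ||| A) 1 ^^^ gm (16 ||| A) 0,
   gm (2 ||| A) 3 ^^^ gm (4 ||| A) 2 ^^^ gm (32 ||| A) 0,
   gm (8 ||| A) 3 ^^^ gm (16 ||| A) 2 ^^^ gm (32 ||| A) 1]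

def r2k (A k : ℕ) : ℕ :=
  gm (1 ||| (32 ||| A)) k ^^^ gm (2 ||| (16 ||| A)) k ^^^ gm (4 ||| (8 ||| A)) k

def r2 (A : ℕ) : List ℕ := [r2k A 0, r2k A 1, r2k A 2, r2k A 3]

def r5 : List ℕ :=
  [gm 24 0 ^^^ gm 6 1 ^^^ gm 25 0 ^^^ gm 7 1, gm 40 0 ^^^ gm 5 2 ^^^ gm 42 0 ^^^ gm 7 2,
   gm 48 0 ^^^ gm 3 3 ^^^ gm 52 0 ^^^ gm 7 3, gm 34 1 ^^^ gm 17 2 ^^^ gm 42 1 ^^^ gm 25 2,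
   gm 36 1 ^^^ gm 9 3 ^^^ gm 52 1 ^^^ gm 25 3, gm 20 2 ^^^ gm 10 3 ^^^ gm 52 2 ^^^ gm 42 3]

theorem ev_w (w : List (Fin 6)) (k : Fin 4) : ev w.length (gm (pmask w) k) = wq w k := by
  rw [ev_gm _ _ _ (pmask_lt w), ← canon]

def act (w : List (Fin 6)) : QQ →ₗ[kk] QQ := w.foldr (fun a f => (Lq a).comp f) LinearMap.id

theorem act_wq (w u : List (Fin 6)) (k : Fin 4) : act w (wq u k) = wq (u ++ w) k := by
  rw [wq_perm (List.perm_append_comm (l₁ := u) (l₂ := w))]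
  induction w with
  | nil => rfl
  | cons a w ih => exact congrArg (Lq a) ih

theorem R4r (i j k : Fin 4) : pq i j (xq k) + pq i k (xq j) + pq j k (xq i) = 0 := by
  rw [← R4 i j k]; abel

theorem r4_sound (w : List (Fin 6)) : ∀ r ∈ r4 (pmask w), ev (w.length + 1) r = 0 := by
  have key : ∀ (a b c : Fin 6) (i j k : Fin 4), wq [a] i + wq [b] j + wq [c] k = 0 →
      ev (w.length + 1) (gm (2 ^ (a : ℕ) ||| pmask w) i ^^^ gm (2 ^ (b : ℕ) ||| pmask w) j
        ^^^ gm (2 ^ (c : ℕ) ||| pmask w) k) = 0 := by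
    intro a b c i j k h
    have h2 := congrArg (act w) h
    rw [map_add, map_add, map_zero, act_wq, act_wq, act_wq] at h2
    rw [ev_xor, ev_xor, ← h2]
    have e1 := ev_w (a :: w) i
    have e2 := ev_w (b :: w) j
    have e3 := ev_w (c :: w) k
    exact congrArg₂ (· + ·) (congrArg₂ (· + ·) e1 e2) e3
  intro r hr
  simp only [r4, List.mem_cons, List.not_mem_nil, or_false] at hr
  rcases hr with rfl | rfl | rfl | rfl
  · exact key 0 1 3 2 1 0 (R4r 0 1 2)
  · exact key 0 2 4 3 1 0 (R4r 0 1 3)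
  · exact key 1 2 5 3 2 0 (R4r 0 2 3)
  · exact key 3 4 5 3 2 1 (R4r 1 2 3)

theorem rY_sound : (∀ r ∈ r4 0, ev 2 r = 0) ∧ (∀ r ∈ r4 0, ev 3 r = 0) := by
  have key : ∀ (u v w : List (Fin 6)) (n : ℕ), u.length = n → v.length = n → w.length = n →
      ∀ (i j k : Fin 4), wq u i + wq v j + wq w k = 0 →
      ev n (gm (pmask u) i ^^^ gm (pmask v) j ^^^ gm (pmask w) k) = 0 := by
    intro u v w n hu hv hw i j k h
    rw [ev_xor, ev_xor, ← h]
    have e1 := ev_w u i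
    have e2 := ev_w v j
    have e3 := ev_w w k
    rw [hu] at e1
    rw [hv] at e2
    rw [hw] at e3
    rw [e1, e2, e3]
  have y2 : ∀ i j k, pq i j (pq i j (xq k)) + pq i k (pq i k (xq j)) + pq j k (pq j k (xq i)) = 0 := by
    intro i j k
    rw [← RY2 i j k]; abel
  have y3 : ∀ i j k, pq i j (pq i j (pq i j (xq k))) + pq i k (pq i k (pq i k (xq j)))
      + pq j k (pq j k (pq j k (xq i))) = 0 := by
    intro i j k
    rw [← RY3 i j k]; abel
  constructor
  · intro r hr
    simp only [r4, List.mem_cons, List.not_mem_nil, or_false] at hr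
    rcases hr with rfl | rfl | rfl | rfl
    · exact key [0, 0] [1, 1] [3, 3] 2 rfl rfl rfl 2 1 0 (y2 0 1 2)
    · exact key [0, 0] [2, 2] [4, 4] 2 rfl rfl rfl 3 1 0 (y2 0 1 3)
    · exact key [1, 1] [2, 2] [5, 5] 2 rfl rfl rfl 3 2 0 (y2 0 2 3)
    · exact key [3, 3] [4, 4] [5, 5] 2 rfl rfl rfl 3 2 1 (y2 1 2 3)
  · intro r hr
    simp only [r4, List.mem_cons, List.not_mem_nil, or_false] at hr
    rcases hr with rfl | rfl | rfl | rfl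
    · exact key [0, 0, 0] [1, 1, 1] [3, 3, 3] 3 rfl rfl rfl 2 1 0 (y3 0 1 2)
    · exact key [0, 0, 0] [2, 2, 2] [4, 4, 4] 3 rfl rfl rfl 3 1 0 (y3 0 1 3)
    · exact key [1, 1, 1] [2, 2, 2] [5, 5, 5] 3 rfl rfl rfl 3 2 0 (y3 0 2 3)
    · exact key [3, 3, 3] [4, 4, 4] [5, 5, 5] 3 rfl rfl rfl 3 2 1 (y3 1 2 3)

theorem r2_sound (w : List (Fin 6)) : ∀ r ∈ r2 (pmask w), ev (w.length + 2) r = 0 := by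
  have key : ∀ k : Fin 4, ev (w.length + 2) (r2k (pmask w) k) = 0 := by
    intro k
    have h : Lq 0 (Lq 5 (wq w k)) + Lq 1 (Lq 4 (wq w k)) + Lq 2 (Lq 3 (wq w k)) = 0 := by
      have := R2g 1 2 3 0 (wq w k)
      rw [pq_symm 1 0, pq_symm 2 0, pq_symm 3 0] at this
      have e : Lq 0 (Lq 5 (wq w k)) + Lq 1 (Lq 4 (wq w k)) + Lq 2 (Lq 3 (wq w k))
        = Lq 5 (Lq 0 (wq w k)) + Lq 4 (Lq 1 (wq w k)) + Lq 3 (Lq 2 (wq w k)) := by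
        rw [Lcomm 0 5, Lcomm 1 4, Lcomm 2 3]
      rw [e]; exact this
    unfold r2k
    rw [ev_xor, ev_xor, ← h]
    have e1 := ev_w (0 :: 5 :: w) k
    have e2 := ev_w (1 :: 4 :: w) k
    have e3 := ev_w (2 :: 3 :: w) k
    exact congrArg₂ (· + ·) (congrArg₂ (· + ·) e1 e2) e3
  intro r hr
  simp only [r2, List.mem_cons, List.not_mem_nil, or_false] at hr
  rcases hr with rfl | rfl | rfl | rfl
  · exact key 0
  · exact key 1
  · exact key 2
  · exact key 3

theorem r5_sound : ∀ r ∈ r5, ev 3 r = 0 := by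
  have key : ∀ (u v w z : List (Fin 6)), u.length = 3 → v.length = 3 → w.length = 3 →
      z.length = 3 → ∀ (i j : Fin 4), wq u i + wq v j + (wq w i + wq z j) = 0 →
      ev 3 (gm (pmask u) i ^^^ gm (pmask v) j ^^^ gm (pmask w) i ^^^ gm (pmask z) j) = 0 := by
    intro u v w z hu hv hw hz i j h
    rw [ev_xor, ev_xor, ev_xor, ← h]
    have e1 := ev_w u i
    have e2 := ev_w v j
    have e3 := ev_w w i
    have e4 := ev_w z j
    rw [hu] at e1
    rw [hv] at e2
    rw [hw] at e3
    rw [hz] at e4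
    rw [e1, e2, e3, e4, add_assoc]
  intro r hr
  simp only [r5, List.mem_cons, List.not_mem_nil, or_false] at hr
  rcases hr with rfl | rfl | rfl | rfl | rfl | rfl
  · exact key [3, 3, 4] [1, 1, 2] [0, 3, 4] [0, 1, 2] rfl rfl rfl rfl 0 1 (Rv 0 1 2 3)
  · have := Rv 0 2 1 3
    rw [pq_symm 2 1] at this
    exact key [3, 3, 5] [0, 0, 2] [1, 3, 5] [1, 0, 2] rfl rfl rfl rfl 0 2 this
  · have := Rv 0 3 1 2
    rw [pq_symm 3 1, pq_symm 3 2] at this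
    exact key [4, 4, 5] [0, 0, 1] [2, 4, 5] [2, 0, 1] rfl rfl rfl rfl 0 3 this
  · have := Rv 1 2 0 3
    rw [pq_symm 2 0, pq_symm 1 0] at this
    exact key [1, 1, 5] [0, 0, 4] [3, 1, 5] [3, 0, 4] rfl rfl rfl rfl 1 2 this
  · have := Rv 1 3 0 2
    rw [pq_symm 3 0, pq_symm 1 0, pq_symm 3 2] at this
    exact key [2, 2, 5] [0, 0, 3] [4, 2, 5] [4, 0, 3] rfl rfl rfl rfl 1 3 this
  · have := Rv 2 3 0 1
    rw [pq_symm 3 0, pq_symm 2 0, pq_symm 3 1, pq_symm 2 1] at this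
    exact key [2, 2, 4] [1, 1, 3] [5, 2, 4] [5, 1, 3] rfl rfl rfl rfl 2 3 this

def asl (hi : ℕ) : List ℕ :=
  (List.range 64).filter fun A => Nat.blt 0 (letters A).length && Nat.ble (letters A).length hi

theorem asl_word (hi n A : ℕ) (hn : hi ≤ n) (hA : A ∈ asl hi) :
    ∃ w : List (Fin 6), w.length = n ∧ pmask w = A := by
  simp only [asl, List.mem_filter, List.mem_range, Bool.and_eq_true, Nat.blt_eq, Nat.ble_eq] at hA
  exact ⟨padl n A, padl_length _ _ (by omega) hA.2.1, pmask_padl _ _ hA.1⟩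

theorem flat4 (hi n : ℕ) (hn : hi ≤ n) : ∀ r ∈ (asl hi).flatMap r4, ev (n + 1) r = 0 := by
  intro r hr
  obtain ⟨A, hA, hr⟩ := List.mem_flatMap.1 hr
  obtain ⟨w, rfl, rfl⟩ := asl_word hi n A hn hA
  exact r4_sound w r hr

theorem flat2 (hi n : ℕ) (hn : hi ≤ n) : ∀ r ∈ (asl hi).flatMap r2, ev (n + 2) r = 0 := by
  intro r hr
  obtain ⟨A, hA, hr⟩ := List.mem_flatMap.1 hr
  obtain ⟨w, rfl, rfl⟩ := asl_word hi n A hn hA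
  exact r2_sound w r hr

def rels1 : List ℕ := r4 0
def rels2 : List ℕ := r4 0 ++ ((asl 1).flatMap r4 ++ r2 0)
def rels3 : List ℕ := r4 0 ++ ((asl 2).flatMap r4 ++ ((asl 1).flatMap r2 ++ r5))
def rels4 : List ℕ := (asl 3).flatMap r4 ++ (asl 2).flatMap r2

theorem sound1 : ∀ r ∈ rels1, ev 1 r = 0 := r4_sound []

theorem sound2 : ∀ r ∈ rels2, ev 2 r = 0 := by
  intro r hr
  simp only [rels2, List.mem_append] at hr
  rcases hr with h | h | h
  · exact rY_sound.1 r h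
  · exact flat4 1 1 le_rfl r h
  · exact r2_sound [] r h

theorem sound3 : ∀ r ∈ rels3, ev 3 r = 0 := by
  intro r hr
  simp only [rels3, List.mem_append] at hr
  rcases hr with h | h | h | h
  · exact rY_sound.2 r h
  · exact flat4 2 2 le_rfl r h
  · exact flat2 1 1 le_rfl r h
  · exact r5_sound r h

theorem sound4 (s : ℕ) : ∀ r ∈ rels4, ev (s + 4) r = 0 := by
  intro r hr
  simp only [rels4, List.mem_append] at hr
  rcases hr with h | h
  · exact flat4 3 (s + 3) (by omega) r h
  · exact flat2 2 (s + 2) (by omega) r h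

def redu (T : List ℕ) (v : ℕ) : ℕ :=
  T.foldl (fun v t => bif Nat.ble (Nat.xor v t) v then Nat.xor v t else v) v

def addRow (T : List ℕ) (r : ℕ) : List ℕ :=
  bif Nat.beq r 0 then T else T ++ [r]

def build (rels : List ℕ) : List ℕ := rels.foldl (fun T r => addRow T (redu T r)) []

theorem redu_sound (s : ℕ) (T : List ℕ) (hT : ∀ t ∈ T, ev s t = 0) (v : ℕ) :
    ev s (redu T v) = ev s v := by
  unfold redu
  induction T generalizing v with
  | nil => rfl
  | cons t T ih =>
    rw [List.foldl_cons, ih (fun t ht => hT t (List.mem_cons_of_mem _ ht))]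
    cases Nat.ble (Nat.xor v t) v
    · rfl
    · change ev s (v ^^^ t) = ev s v
      rw [ev_xor, hT t (by simp), add_zero]

theorem build_sound (s : ℕ) (rels : List ℕ) (h : ∀ r ∈ rels, ev s r = 0) :
    ∀ t ∈ build rels, ev s t = 0 := by
  have : ∀ (rels T : List ℕ), (∀ r ∈ rels, ev s r = 0) → (∀ t ∈ T, ev s t = 0) →
      ∀ t ∈ rels.foldl (fun T r => addRow T (redu T r)) T, ev s t = 0 := by
    intro rels
    induction rels with
    | nil => intro T _ hT; exact hT
    | cons r rels ih =>
      intro T hr hT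
      rw [List.foldl_cons]
      apply ih _ (fun r h => hr r (List.mem_cons_of_mem _ h))
      intro t ht
      unfold addRow at ht
      cases hb : Nat.beq (redu T r) 0
      · rw [hb, cond_false, List.mem_append, List.mem_singleton] at ht
        rcases ht with ht | rfl
        · exact hT t ht
        · rw [redu_sound s T hT]; exact hr r (by simp)
      · rw [hb, cond_true] at ht
        exact hT t ht
  exact this rels [] h (by simp)


/-! ### The dual flags -/

def data1 : List (ℕ × ℕ × ℕ × ℕ) :=
  [(15, 6, 51, 4083388403051261561560495289232758736784),
   (14, 7, 55, 4083388403051261561744962729952674383728),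
   (13, 7, 61, 4083388403051261561744962729944084449840), (11, 6, 59, 328960),
   (15, 5, 45, 4083388403051261561744962729944083861216),
   (13, 6, 59, 4083388403051261561560495289232758737552),
   (12, 7, 62, 1361129467683753854111752846776186636848),
   (11, 7, 62, 4083388403051261561744962729944084448704), (15, 7, 52, 184467440780045649776),
   (13, 5, 36, 184467440780045847200), (11, 5, 47, 184467440780045978816),
   (10, 7, 61, 221360928936054556096), (14, 5, 47, 4083388403051261561744962729952673795808),
   (12, 6, 56, 1361129467683753853927285406039091120784),
   (10, 6, 56, 4083388403051261561560495289181219128576), (14, 6, 48, 73786976312018536336),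
   (10, 5, 45, 221360928936055016640), (9, 7, 55, 184467440780045189120),
   (12, 5, 38, 1361129467683753854111752846776187095712),
   (9, 5, 38, 4083388403051261561744962729944083857408)]

def data2 : List (ℕ × ℕ × ℕ × ℕ) :=
  [(15, 6, 51, 20070059241870523953216), (14, 7, 55, 20070059241595646046208),
   (13, 7, 61, 20070059804545813377024), (11, 6, 59, 56668401735360339537984),
   (15, 5, 45, 20070060939241746119424), (13, 6, 59, 38959525173349289324608),
   (12, 7, 62, 696898287454081973230840187124814289336320), (11, 7, 62, 20070059804545577447424),
   (15, 7, 52, 4893552270126019422220288), (13, 5, 36, 4893552271260715422333696),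
   (11, 5, 47, 20070060939241757653760), (10, 7, 61, 60210176597787451355264),
   (14, 5, 47, 57848991113349018172160),
   (12, 6, 56, 11692013795545510800028364485959111401259403376704),
   (10, 6, 56, 950737971421823476110638248128), (14, 6, 48, 316917543683114452963314135104),
   (10, 5, 45, 60210174354783852313472), (9, 7, 55, 4893552270126019547459584),
   (12, 5, 38, 20070059250391739054848), (9, 5, 38, 4893552271260715425676032),
   (15, 4, 42, 1045347431181122959798446319216935307327296),
   (13, 4, 34, 20070059255064663473984), (11, 2, 17, 20070059241458207084720),
   (8, 7, 52, 179102859875699067115152575178859017075161216),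
   (15, 2, 25, 59619880787841060458544), (13, 3, 31, 20070060366945991053520),
   (11, 4, 42, 1045347431181122959816155194644250546419520), (7, 2, 9, 41911005350217915596912),
   (15, 3, 30, 20070060366945772949712), (13, 2, 25, 41911003662330341904432),
   (11, 3, 20, 4893552270688419619950800), (7, 3, 10, 20070061501641768567504),
   (14, 4, 40, 17538020693318266199884090403319842629107761329984),
   (10, 3, 21, 20070059241045890224336),
   (8, 6, 48, 50216813894785638312193414431308663073299186358107844344000),
   (12, 4, 32, 5846006550684741140815410728401746100408163778368),
   (8, 5, 36, 9693837799408859963177856), (9, 6, 51, 4873482214262398499942464),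
   (9, 4, 34, 4873482213140896593459008), (9, 3, 21, 4893552270688419704164560),
   (14, 3, 31, 57848993355802870829264),
   (10, 4, 40, 17538020693318266200517915723504011494972187523008),
   (6, 3, 11, 38959526298424387338448), (5, 3, 11, 20070061501641919564752),
   (5, 2, 9, 59619877980925468904240), (9, 2, 17, 4873482213699586020069424),
   (8, 4, 32, 50216813888939452664093315462478079845257170114110098716608),
   (14, 2, 24, 1109194297040648525293577883696), (10, 2, 16, 475373868748537178835457822896),
   (6, 2, 8, 792281648164183929413686002288),
   (12, 3, 30, 696898287454081973230840189376064385997008),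
   (4, 3, 10, 1045347431181122959798446320328816483927504),
   (8, 3, 20, 179102859875699067105478807436448199319869648),
   (12, 2, 24, 11692013795545510800820646114053231577325976475696),
   (4, 2, 8, 17538020693318266200359459380176312694018034107696),
   (8, 2, 16, 50216813894785638312193414430833284424630325363153040136240)]

def data3 : List (ℕ × ℕ × ℕ × ℕ) :=
  [(15, 6, 51, 167329879286794698495798724820992), (14, 7, 55, 162259276887062372510529323302912),
   (13, 7, 61, 597289900617760768), (11, 6, 59, 167329879250196395970656064241664),
   (15, 5, 45, 597289901687308288), (13, 6, 59, 167329879230126876036215382999040),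
   (12, 7, 62, 2993155353253689176643405814252231640246570503372800),
   (11, 7, 62, 57420895248973824), (15, 7, 52, 4873482232276522077552640),
   (13, 5, 36, 4873482232276523222859776), (11, 5, 47, 632755748723490816),
   (10, 7, 61, 172400481651109313576642877063168),
   (14, 5, 47, 162259276849284017108325538725888),
   (12, 6, 56, 3004847366352336399832163531135718518219885359661056),
   (10, 6, 56, 16162545152909982289978214842368), (14, 6, 48, 5387519925706585829895315685376),
   (10, 5, 45, 172400481651109887785596444737536), (9, 7, 55, 632755749797232640),
   (12, 5, 38, 2993155353950587464097487787463001191669037799606272),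
   (9, 5, 38, 57420898671525888),
   (15, 4, 42, 4489733029880533764889049685334548313553937224433664),
   (13, 4, 34, 4489733030925881196070172645150702927792112773662720),
   (11, 2, 17, 180006385292028470999060081311872),
   (8, 7, 52, 3291009114645405239663192054291354556989361492058793886762401792),
   (15, 2, 25, 180006385252478690549123375955968), (13, 3, 31, 632755748186619904),
   (11, 4, 42, 4489733029880533764889049685354618407688534310780928),
   (7, 2, 9, 180006385252478671972187200561216), (15, 3, 30, 57420895819399168),
   (13, 2, 25, 180006385232409205517029983911936), (11, 3, 20, 4873482232276522583097344),
   (7, 3, 10, 20070097530989074981376),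
   (14, 4, 40, 4507271049528504599745551539168057462426185083387904),
   (10, 3, 21, 172400481691249390400438567731328),
   (8, 6, 48, 3291059331459300025122401387829929609862910584019990946777137152),
   (12, 4, 32, 1502423683525978473113500268398394626476052836548608),
   (8, 5, 36, 3291009114645405239842294914167053624094820228857288489261336576),
   (9, 6, 51, 167329879269086437236989193355264),
   (9, 4, 34, 4489733030925881196070172645132994092315554785263616),
   (9, 3, 21, 597289903312601088), (14, 3, 31, 162259276849283478928169531080704),
   (10, 4, 40, 4507271049528504599756326569249927389117827745054720),
   (6, 3, 11, 167329879250196377956532973740096), (5, 3, 11, 20070673982946392694784),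
   (5, 2, 9, 180006385232409188065994852032512), (9, 2, 17, 180006385274320174837903269036032),
   (8, 4, 32, 3291059331457797601617983713750391299235312046771558301191899136),
   (14, 2, 24, 18856302678394969768159279579136), (10, 2, 16, 8081277451818762606582440296448),
   (6, 2, 8, 13468787647495034921522179351040),
   (12, 3, 30, 2993155353253689176643405814252231678527167839338496),
   (4, 3, 10, 4489733029880533764889049685354618390804709203010112),
   (8, 3, 20, 3291009114645405239663192054291354556999035259760671758731051136),
   (12, 2, 24, 3004847366352336399845632318763143489387785539813376),
   (4, 2, 8, 4507271049528504599753632811724442382503910660137536),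
   (8, 2, 16, 3291059331459300025122401387829921528600006310339443938241413248),
   (15, 1, 7, 632755751676280832), (13, 1, 6, 57420899527163904), (11, 1, 5, 597289904651632640),
   (7, 1, 3, 20070673982948808650752), (9, 1, 4, 4873482232276524014731264),
   (5, 1, 2, 20070097530991641934592), (3, 1, 1, 20070637953601502236880),
   (14, 1, 7, 162259276887062987251882485907456), (10, 1, 5, 172400481691249969112994188132480),
   (6, 1, 3, 167329879269086419222867436662848), (2, 1, 1, 180006385274320156260967893717040),
   (12, 1, 6, 2993155353950587464097487787463001229949637702486016),
   (4, 1, 2, 4489733030925881196070172645132994073179929008158528),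
   (8, 1, 4, 3291009114645405239842294914167053624104493996563669958854117504)]

def phi (v b S k : ℕ) : Bool := Nat.beq (S ||| b) b && v.testBit k

def tgt (data : List (ℕ × ℕ × ℕ × ℕ)) (S k x : ℕ) : ℕ :=
  data.foldl (fun x p => bif phi p.1 p.2.2.1 S k then x ^^^ p.2.2.2 else x) x

def check (rels : List ℕ) (data : List (ℕ × ℕ × ℕ × ℕ)) (t : ℕ) : Bool :=
  (asl t).all fun S => (List.range 4).all fun k =>
    Nat.beq (redu (build rels) (tgt data S k (gm S k))) 0

theorem check1 : check rels1 data1 1 = true := by decide +kernel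
theorem check2 : check rels2 data2 2 = true := by decide +kernel
theorem check3 : check rels3 data3 3 = true := by decide +kernel
theorem check4 : check rels4 data3 4 = true := by decide +kernel

/-- The support of the data only involves generators with at most three letters. -/
def good (data : List (ℕ × ℕ × ℕ × ℕ)) (t : ℕ) : Bool :=
  (List.range 256).all fun i => (asl t).contains (i / 4) || data.all fun p => !p.2.2.2.testBit i

theorem good3 : good data3 3 = true := by decide +kernel

def cons (data : List (ℕ × ℕ × ℕ × ℕ)) : Bool :=
  data.all fun p => (List.finRange 6).all fun a =>
    (p.2.2.1.testBit a == ((p.1.testBit (la a) && p.2.1.testBit (lb a)) ^^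
      (p.2.1.testBit (la a) && p.1.testBit (lb a))))

theorem cons1 : cons data1 = true := by decide +kernel
theorem cons2 : cons data2 = true := by decide +kernel
theorem cons3 : cons data3 = true := by decide +kernel


/-! ### Duality and the final argument -/

def vec (n : ℕ) : Fin 4 → kk := fun i => if n.testBit i then 1 else 0

theorem vecB (v w i j : ℕ) (x y : Fin 4) (hx : i = x) (hy : j = y) :
    vec v x * vec w y + vec w x * vec v y =
      if ((v.testBit i && w.testBit j) ^^ (w.testBit i && v.testBit j)) then 1 else 0 := by
  subst hx hy
  unfold vec
  cases v.testBit x <;> cases w.testBit x <;> cases v.testBit y <;> cases w.testBit y <;>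
    simp <;> decide

def okp (p : ℕ × ℕ × ℕ × ℕ) : Prop := ∀ a : Fin 6,
  p.2.2.1.testBit a = ((p.1.testBit (la a) && p.2.1.testBit (lb a)) ^^
      (p.2.1.testBit (la a) && p.1.testBit (lb a)))

theorem cons_ok (data : List (ℕ × ℕ × ℕ × ℕ)) (h : cons data = true) : ∀ p ∈ data, okp p := by
  intro p hp a
  unfold cons at h
  rw [List.all_eq_true] at h
  have := h p hp
  rw [List.all_eq_true] at this
  exact beq_iff_eq.1 (this a (List.mem_finRange a))

theorem ok1 : ∀ p ∈ data1, okp p := cons_ok data1 cons1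
theorem ok2 : ∀ p ∈ data2, okp p := cons_ok data2 cons2
theorem ok3 : ∀ p ∈ data3, okp p := cons_ok data3 cons3

theorem psi_word (p : ℕ × ℕ × ℕ × ℕ) (hp : okp p) (l : List (Fin 6)) (k : Fin 4) :
    psiQ (vec p.1) (vec p.2.1) l.length (wq l k) =
      if (∀ a ∈ l, p.2.2.1.testBit a = true) ∧ p.1.testBit k = true then 1 else 0 := by
  induction l with
  | nil =>
    change psiQ _ _ 0 (xq k) = _
    rw [psiQ_x]; simp [vec]
  | cons a l ih =>
    change psiQ _ _ (l.length + 1) (Lq a (wq l k)) = _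
    rw [psiQ_Lq, ih, vecB p.1 p.2.1 _ _ _ _ rfl rfl, ← hp a]
    by_cases h : p.2.2.1.testBit a = true
    · simp [h]
    · simp [h]

theorem sub_iff (S b : ℕ) (hS : S < 64) :
    Nat.beq (S ||| b) b = true ↔ ∀ a ∈ letters S, b.testBit a = true := by
  rw [Nat.beq_eq]
  constructor
  · intro h a ha
    rw [← h, Nat.testBit_or, (mem_letters _ _).1 ha, Bool.true_or]
  · intro h
    apply Nat.eq_of_testBit_eq
    intro i
    rw [Nat.testBit_or]
    cases hi : S.testBit i
    · simp
    · have hi6 : i < 6 := by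
        by_contra hc
        have : S < 2 ^ i := lt_of_lt_of_le hS (Nat.pow_le_pow_right (n := 2) (by norm_num) (not_lt.1 hc))
        rw [Nat.testBit_lt_two_pow this] at hi
        simp at hi
      have := h ⟨i, hi6⟩ ((mem_letters _ _).2 hi)
      simpa using this.symm

theorem mem_asl (t S : ℕ) : S ∈ asl t ↔ S < 64 ∧ 0 < (letters S).length ∧ (letters S).length ≤ t := by
  simp only [asl, List.mem_filter, List.mem_range, Bool.and_eq_true, Nat.blt_eq, Nat.ble_eq]

theorem psi_val (p : ℕ × ℕ × ℕ × ℕ) (hp : okp p) (s S : ℕ) (hS : S ∈ asl s) (k : Fin 4) :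
    psiQ (vec p.1) (vec p.2.1) s (val s S k) = if phi p.1 p.2.2.1 S k = true then 1 else 0 := by
  obtain ⟨h1, h2, h3⟩ := (mem_asl _ _).1 hS
  have := psi_word p hp (padl s S) k
  rw [padl_length s S h3 h2] at this
  unfold val
  rw [this]
  congr 1
  unfold phi
  rw [Bool.and_eq_true, sub_iff _ _ h1]
  simp only [mem_padl]

theorem asl_mono {t s S : ℕ} (h : t ≤ s) (hS : S ∈ asl t) : S ∈ asl s := by
  rw [mem_asl] at *; omega

def combo (data : List (ℕ × ℕ × ℕ × ℕ)) (s : ℕ) : QQ →ₗ[kk] QQ :=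
  (data.map fun p => (psiQ (vec p.1) (vec p.2.1) s).smulRight (ev s p.2.2.2)).sum

theorem combo_apply (data : List (ℕ × ℕ × ℕ × ℕ)) (s : ℕ) (y : QQ) : combo data s y =
    (data.map fun p => psiQ (vec p.1) (vec p.2.1) s y • ev s p.2.2.2).sum := by
  unfold combo
  induction data with
  | nil => rfl
  | cons p l ih =>
    rw [List.map_cons, List.sum_cons, LinearMap.add_apply, ih]; rfl

attribute [irreducible] combo

theorem tgt_sound (data : List (ℕ × ℕ × ℕ × ℕ)) (hd : ∀ p ∈ data, okp p) (s S : ℕ)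
    (hS : S ∈ asl s) (k : Fin 4) (x : ℕ) :
    ev s (tgt data S k x) = ev s x + combo data s (val s S k) := by
  rw [combo_apply]
  unfold tgt
  induction data generalizing x with
  | nil => simp
  | cons p l ih =>
    rw [List.foldl_cons, ih (fun q hq => hd q (List.mem_cons_of_mem _ hq)), List.map_cons,
      List.sum_cons, psi_val p (hd p (by simp)) s S hS k]
    cases phi p.1 p.2.2.1 S k
    · simp
    · simp [ev_xor, add_assoc]

theorem check_sound (rels : List ℕ) (data : List (ℕ × ℕ × ℕ × ℕ)) (t s : ℕ)
    (hc : check rels data t = true) (hr : ∀ r ∈ rels, ev s r = 0) (hd : ∀ p ∈ data, okp p)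
    (hts : t ≤ s) (S : ℕ) (hS : S ∈ asl t) (k : Fin 4) :
    combo data s (val s S k) = val s S k := by
  unfold check at hc
  rw [List.all_eq_true] at hc
  have h1 := hc S hS
  rw [List.all_eq_true] at h1
  have h2 := Nat.eq_of_beq_eq_true (h1 k (List.mem_range.2 k.2))
  have h3 := redu_sound s (build rels) (build_sound s rels hr) (tgt data S k (gm S k))
  rw [h2, ev_zero, tgt_sound data hd s S (asl_mono hts hS), ev_gm _ _ _ ((mem_asl _ _).1 hS).1] at h3
  exact (eq_of_cc h3.symm).symm

theorem pmask_asl (w : List (Fin 6)) (hw : 0 < w.length) : pmask w ∈ asl w.length := by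
  rw [mem_asl]
  refine ⟨pmask_lt w, ?_, letters_le w⟩
  rcases w with _ | ⟨a, w⟩
  · simp at hw
  · exact List.length_pos_of_mem ((mem_letters_pmask (a :: w) a).2 (by simp))

theorem small_case (rels : List ℕ) (data : List (ℕ × ℕ × ℕ × ℕ)) (s : ℕ) (hs : 0 < s)
    (hc : check rels data s = true) (hr : ∀ r ∈ rels, ev s r = 0) (hd : ∀ p ∈ data, okp p)
    (w : List (Fin 6)) (hw : w.length = s) (k : Fin 4) :
    combo data s (wq w k) = wq w k := by
  subst hw
  rw [canon]
  exact check_sound rels data _ _ hc hr hd le_rfl _ (pmask_asl w hs) k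

theorem ev_mem (s : ℕ) (u : ℕ) (N : Submodule kk QQ)
    (h : ∀ i < 256, u.testBit i = true → gv s i ∈ N) : ev s u ∈ N := by
  unfold ev
  refine Submodule.sum_mem _ fun i hi => ?_
  split_ifs with hb
  · exact h i (Finset.mem_range.1 hi) hb
  · exact Submodule.zero_mem _

theorem combo_mem (data : List (ℕ × ℕ × ℕ × ℕ)) (s : ℕ) (y : QQ) (N : Submodule kk QQ)
    (h : ∀ p ∈ data, ev s p.2.2.2 ∈ N) : combo data s y ∈ N := by
  rw [combo_apply]
  refine list_sum_mem ?_
  intro z hz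
  obtain ⟨p, hp, rfl⟩ := List.mem_map.1 hz
  exact Submodule.smul_mem _ _ (h p hp)

theorem good_gv (s : ℕ) (N : Submodule kk QQ) (h : ∀ S ∈ asl 3, ∀ k, val s S k ∈ N) :
    ∀ p ∈ data3, ev s p.2.2.2 ∈ N := by
  intro p hp
  refine ev_mem s _ N fun i hi hb => ?_
  have hg := good3
  unfold good at hg
  rw [List.all_eq_true] at hg
  have h1 := hg i (List.mem_range.2 hi)
  rw [Bool.or_eq_true, List.all_eq_true, List.contains_iff_mem] at h1
  rcases h1 with h1 | h1
  · exact h _ h1 _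
  · have := h1 p hp
    rw [hb] at this
    simp at this

theorem letters_cons (a : Fin 6) (s S : ℕ) :
    (letters (pmask (a :: padl s S))).length ≤ (letters S).length + 1 := by
  have : (letters (pmask (a :: padl s S))).Subperm (a :: letters S) := by
    refine (letters_nodup _).subperm fun b h => ?_
    rw [mem_letters_pmask, List.mem_cons, mem_padl] at h
    rw [List.mem_cons]; exact h
  simpa using this.length_le

theorem big_case (s : ℕ) : ∀ (w : List (Fin 6)), w.length = s + 4 → ∀ k : Fin 4,
    combo data3 (s + 4) (wq w k) = wq w k := by
  induction s with
  | zero =>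
    intro w hw k
    exact small_case rels4 data3 4 (by norm_num) check4 (sound4 0) ok3 w hw k
  | succ s ih =>
    intro w hw k
    rcases w with _ | ⟨a, w⟩
    · simp at hw
    have hw' : w.length = s + 4 := by simpa using hw
    let N : Submodule kk QQ :=
      (LinearMap.ker (combo data3 (s + 1 + 4) - LinearMap.id)).comap (Lq a)
    have hN : ∀ y, y ∈ N ↔ combo data3 (s + 1 + 4) (Lq a y) = Lq a y := by
      intro y
      rw [Submodule.mem_comap, LinearMap.mem_ker, LinearMap.sub_apply, sub_eq_zero]; rfl
    have hmem : wq w k ∈ N := by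
      rw [← ih w hw' k]
      refine combo_mem _ _ _ N (good_gv _ N fun S hS k' => ?_)
      rw [hN]
      obtain ⟨h1, h2, h3⟩ := (mem_asl _ _).1 hS
      have hl : (a :: padl (s + 4) S).length = s + 1 + 4 := by
        rw [List.length_cons, padl_length _ _ (by omega) h2]
      have e : Lq a (val (s + 4) S k') = val (s + 1 + 4) (pmask (a :: padl (s + 4) S)) k' := by
        have := canon (a :: padl (s + 4) S) k'
        rw [hl] at this
        exact this
      rw [e]
      refine check_sound rels4 data3 4 (s + 1 + 4) check4 (sound4 (s + 1)) ok3
        (by omega) _ ?_ k'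
      have := (mem_asl _ _).1 (pmask_asl (a :: padl (s + 4) S) (by simp))
      have h4 := letters_cons a (s + 4) S
      rw [mem_asl]
      exact ⟨this.1, this.2.1, by omega⟩
    have h5 := (hN _).1 hmem
    have e5 : wq (a :: w) k = Lq a (wq w k) := rfl
    rw [e5]; exact h5

theorem dual_all (s : ℕ) : ∃ data, ∀ y ∈ WW (s + 1), combo data (s + 1) y = y := by
  have key : ∃ data, ∀ w : List (Fin 6), w.length = s + 1 → ∀ k : Fin 4,
      combo data (s + 1) (wq w k) = wq w k := by
    rcases s with _ | _ | _ | s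
    · exact ⟨data1, small_case rels1 data1 1 (by norm_num) check1 sound1 ok1⟩
    · exact ⟨data2, small_case rels2 data2 2 (by norm_num) check2 sound2 ok2⟩
    · exact ⟨data3, small_case rels3 data3 3 (by norm_num) check3 sound3 ok3⟩
    · exact ⟨data3, big_case s⟩
  obtain ⟨data, h⟩ := key
  refine ⟨data, fun y hy => ?_⟩
  have : WW (s + 1) ≤ LinearMap.ker (combo data (s + 1) - LinearMap.id) := by
    refine Submodule.span_le.2 ?_
    rintro _ ⟨w, k, hw, rfl⟩
    rw [SetLike.mem_coe, LinearMap.mem_ker, LinearMap.sub_apply, sub_eq_zero]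
    exact h w hw k
  have h2 := this hy
  rw [LinearMap.mem_ker, LinearMap.sub_apply, sub_eq_zero] at h2
  exact h2

theorem WW_zero (s : ℕ) (y : QQ) (hy : y ∈ WW (s + 1)) (h : ∀ v w, psiQ v w (s + 1) y = 0) :
    y = 0 := by
  obtain ⟨data, hd⟩ := dual_all s
  rw [← hd y hy, combo_apply]
  simp [h]

theorem kameko_homog (m : ℕ) {f : P4} (hf : f ∈ homog (2 * m + 4)) : kameko f ∈ homog m := by
  have : homog (2 * m + 4) ≤ (homog m).comap kameko := by
    refine homog_le _ _ fun d hd => ?_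
    rw [Submodule.mem_comap]
    have e : kameko (monomial d 1) = if ∀ i, d i % 2 = 1 then monomial (halfExp d) 1 else 0 := by
      have := (basisMonomials (Fin 4) kk).constr_basis kk (fun d : Fin 4 →₀ ℕ =>
        (if ∀ i, d i % 2 = 1 then monomial (halfExp d) 1 else 0 : P4)) d
      rw [coe_basisMonomials] at this
      unfold kameko
      convert this
    rw [e]
    split_ifs with h
    · refine (mem_homogeneousSubmodule _ _).2 (isHomogeneous_monomial _ ?_)
      rw [Finsupp.degree_eq_sum, Fin.sum_univ_four] at *
      have h0 := h 0
      have h1 := h 1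
      have h2 := h 2
      have h3 := h 3
      simp only [halfExp, Finsupp.mapRange_apply]
      omega
    · exact Submodule.zero_mem _
  exact this hf

theorem Qmk_zero (n : ℕ) {f : P4} (hf : f ∈ homog n) : Qmk n f = 0 ↔ f ∈ hitSub n := by
  have e : homogeneousComponent n f = f :=
    homogeneousComponent_of_mem ((mem_homogeneousSubmodule _ _).1 hf) |>.trans (if_pos rfl)
  unfold Qmk
  rw [LinearMap.comp_apply, Submodule.mkQ_apply, Submodule.Quotient.mk_eq_zero, Submodule.mem_comap]
  change homogeneousComponent n f ∈ _ ↔ _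
  rw [e]

/-- For `s ≥ 1` and `n = 2(2^s-1) + 2^s = 3·2^s - 2 = 2m + 4` (so `m = 3·2^{s-1} - 3`
and the Kameko map is `Sq^0 : Q_{3·2^s-2} → Q_{3·2^{s-1}-3}`), the subspace of
`GL_4(F_2)`-invariant elements of the kernel of the Kameko surjection is trivial. -/
theorem statement_3 (s m : ℕ) (hs : 1 ≤ s) (hm : 2 * m + 4 = 2 * (2 ^ s - 1) + 2 ^ s) :
    kamekoKer m ⊓ QInv (2 * m + 4) glSet = ⊥ := by
  obtain ⟨t, rfl⟩ : ∃ t, s = t + 1 := ⟨s - 1, by omega⟩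
  have hn := nn_eq t
  have hn1 := nn_eq (t + 1)
  have hpos : 0 < 2 ^ t := by positivity
  have hp : 2 ^ (t + 1) = 2 * 2 ^ t := by rw [pow_succ]; ring
  have hm1 : m + 1 = nn t := by omega
  have hm2 : 2 * m + 4 = nn (t + 1) := by omega
  rw [eq_bot_iff]
  rintro c ⟨hc1, hc2⟩
  obtain ⟨f, ⟨hf1, hf2⟩, rfl⟩ := hc1
  obtain ⟨g, ⟨hg1, hg2⟩, hfg⟩ := hc2
  have hk : kameko f ∈ hitSub m := by
    rw [← Qmk_zero m (kameko_homog m hf1)]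
    exact hf2
  have hfg' : g - f ∈ hitSub (2 * m + 4) := by
    rw [← Qmk_zero _ (Submodule.sub_mem _ hg1 hf1), map_sub, hfg, sub_self]
  have hcl : cl g = cl f := by
    have := (cl_eq_zero).2 (hitSub_le_Hit _ hfg')
    rwa [map_sub, sub_eq_zero] at this
  have hG : GInv g := by
    intro M hM
    have := (Submodule.mem_iInf _).1 hg2 M
    have := (Submodule.mem_iInf _).1 this hM
    exact hitSub_le_Hit _ this
  have hW : cl f ∈ WW (t + 1) := ker_words t m hm1 (hm2 ▸ hf1) hk
  have hz : cl f = 0 := by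
    refine WW_zero t _ hW fun v w => ?_
    rw [← hcl]
    exact psi_zero hG t (hcl ▸ hW) v w
  rw [Submodule.mem_bot]
  exact (Qmk_zero _ hf1).2 (Hit_homog (cl_eq_zero.1 hz) hf1)

end
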